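/- arXiv:0805.2047 — 2 statements merged into one kernel-verified Lean document; each statement's English description precedes it below -/
import Mathlib

section
/- Let q > 1 be a real number and let m be the largest integer smaller than q. A sequence (b_i) = b_1 b_2 ... with all b_i ∈ {0, ..., m} is the greedy expansion in base q of some number x ∈ J_q if and only if b_{n+1} b_{n+2} ... < α_1(q) α_2(q) ... lexicographically for every n with b_n < m. -/
/-!
Both directions compare remainder sequences, i.e. sequences `u` with `u (n+1) = q * u n - c n` for
digits `c`. As long as two such sequences use the same digits, their difference is multiplied by
`q` at each step (`rem_sub`). The remainders of the quasi-greedy expansion of `1` all lie in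
`(0, 1]` (`qgRem_one_mem`).

*Necessity.* If the greedy digit `b n` is less than `m`, the next greedy remainder `y` is less
than `1`. The digits following `b n` cannot all agree with `α`, since then the difference of the
remainders, `q ^ i * (1 - y)`, would be unbounded; at the first disagreement the remainder of `y`
is still the smaller one, hence so is its digit.

*Sufficiency.* Let `V k` be the value of the tail `b k, b (k+1), …`. It suffices that
`V k < 1` whenever `b (k-1) < m`, for then `V` is the greedy remainder sequence of `V 0`. If the tail
at such a `k` first falls below `α` at position `j`, the sequences satisfy
`V k - 1 < (V (k+j+1) - 1) / q ^ (j+1)`, and `b (k+j) < m` again. An excess `V k - 1 > 0` would thus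
grow by a factor `q` indefinitely, contradicting the boundedness of `V`; so `V k ≤ 1` at all such
positions, and the strict inequality improves this to `V k < 1`.
-/

noncomputable section

/-- The largest integer smaller than `q`, as a natural number (for `q > 1` this is `⌈q⌉ - 1`). -/
def topDigit (q : ℝ) : ℕ := ⌈q⌉.toNat - 1

/-- Greedy digit associated to a remainder `y` : the largest nonnegative integer `b` with
`b < q` and `b ≤ q * y`. -/
def gDigit (q y : ℝ) : ℕ := min (topDigit q) ⌊q * y⌋₊

/-- Remainders of the greedy algorithm in base `q` starting from `x`. -/
def gRem (q x : ℝ) : ℕ → ℝ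
  | 0 => x
  | n + 1 => q * gRem q x n - gDigit q (gRem q x n)

/-- The greedy expansion of `x` in base `q`, `0`-indexed: `greedy q x n` is the digit `b_{n+1}`,
i.e. the largest integer smaller than `q` such that `∑_{i ≤ n} (greedy q x i) / q^(i+1) ≤ x`. -/
def greedy (q x : ℝ) (n : ℕ) : ℕ := gDigit q (gRem q x n)

/-- Quasi-greedy digit associated to a remainder `y` : the largest nonnegative integer `b` with
`b < q` and `b < q * y` (it is `0` when no such integer exists, matching the convention that the
quasi-greedy expansion of `0` is `0^∞`). -/
def qgDigit (q y : ℝ) : ℕ := min (topDigit q) (⌈q * y⌉.toNat - 1)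

/-- Remainders of the quasi-greedy algorithm in base `q` starting from `x`. -/
def qgRem (q x : ℝ) : ℕ → ℝ
  | 0 => x
  | n + 1 => q * qgRem q x n - qgDigit q (qgRem q x n)

/-- The quasi-greedy expansion of `x` in base `q`, `0`-indexed: `quasiGreedy q x n` is the digit
`a_{n+1}`, i.e. the largest integer smaller than `q` with `∑_{i ≤ n} (quasiGreedy q x i) / q^(i+1) < x`
(with the convention `quasiGreedy q 0 = 0^∞`). -/
def quasiGreedy (q x : ℝ) (n : ℕ) : ℕ := qgDigit q (qgRem q x n)

/-- `alphaSeq q` is the quasi-greedy expansion of `1` in base `q` (`0`-indexed: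
`alphaSeq q (i-1) = α_i(q)`). -/
def alphaSeq (q : ℝ) : ℕ → ℕ := quasiGreedy q 1

/-- Strict lexicographic order on digit sequences. -/
def lexLt (a b : ℕ → ℕ) : Prop := ∃ n, (∀ i, i < n → a i = b i) ∧ a n < b n

/-- Lexicographic order on digit sequences. -/
def lexLe (a b : ℕ → ℕ) : Prop := lexLt a b ∨ a = b

/-- `c` is an expansion of `x` in base `q`: the digits are nonnegative integers smaller than `q`
and `x = ∑_{i≥0} c_i / q^(i+1)`. -/
def IsExpansion (q : ℝ) (c : ℕ → ℕ) (x : ℝ) : Prop :=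
  (∀ i, (c i : ℝ) < q) ∧ x = ∑' i : ℕ, (c i : ℝ) / q ^ (i + 1)

/-- The interval `J_q = [0, (⌈q⌉-1)/(q-1)]` of numbers having an expansion in base `q`. -/
def Jset (q : ℝ) : Set ℝ := Set.Icc 0 (((⌈q⌉ : ℝ) - 1) / (q - 1))

/-- `USet q` is the set `𝒰_q` of numbers `x ∈ J_q` having a unique expansion in base `q`. -/
def USet (q : ℝ) : Set ℝ := {x | x ∈ Jset q ∧ ∃! c, IsExpansion q c x}

/-- `USeq q` is the set `𝒰_q'` of univoque sequences in base `q`, i.e. sequences that are the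
unique expansion in base `q` of some number. -/
def USeq (q : ℝ) : Set (ℕ → ℕ) :=
  {c | ∃ x, IsExpansion q c x ∧ ∀ c', IsExpansion q c' x → c' = c}

/-- The set `𝒰` of univoque bases: `q > 1` such that `1` has a unique expansion in base `q`. -/
def UnivBases : Set ℝ := {q | 1 < q ∧ ∃! c, IsExpansion q c 1}

/-- The set `𝒱_q`: numbers `x ∈ J_q` whose quasi-greedy expansion `(a_i)` satisfies
`overline{a_{n+1} a_{n+2} …} ≤ α_1 α_2 …` whenever `a_n > 0`. -/
def VSet (q : ℝ) : Set ℝ :=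
  {x | x ∈ Jset q ∧ ∀ n, 0 < quasiGreedy q x n →
    lexLe (fun i => topDigit q - quasiGreedy q x (n + 1 + i)) (alphaSeq q)}

/-- `VSeq q` is the set `𝒱_q'` of quasi-greedy expansions of elements of `𝒱_q`. -/
def VSeq (q : ℝ) : Set (ℕ → ℕ) := (fun x => quasiGreedy q x) '' VSet q

/-- The set `𝒱` of bases `q > 1` with `overline{α_{k+1} α_{k+2} …} ≤ α_1 α_2 …` for all `k ≥ 1`. -/
def VBases : Set ℝ :=
  {q | 1 < q ∧ ∀ k, 1 ≤ k → lexLe (fun i => topDigit q - alphaSeq q (k + i)) (alphaSeq q)}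

/-- A digit sequence is infinite if it has infinitely many nonzero terms. -/
def InfiniteSeq (c : ℕ → ℕ) : Prop := ∀ N, ∃ i, N ≤ i ∧ c i ≠ 0

/-- A digit sequence is ultimately periodic if some tail of it is periodic. -/
def UltimatelyPeriodic (c : ℕ → ℕ) : Prop := ∃ n p, 0 < p ∧ ∀ i, n ≤ i → c (i + p) = c i

end

lemma topDigit_cast {q : ℝ} (hq : 1 < q) : (topDigit q : ℝ) = (⌈q⌉ : ℝ) - 1 := by
  have h1 : (1 : ℤ) < ⌈q⌉ := Int.lt_ceil.2 (by exact_mod_cast hq)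
  have h2 : (topDigit q : ℤ) = ⌈q⌉ - 1 := by
    unfold topDigit
    omega
  exact_mod_cast congrArg (fun z : ℤ => (z : ℝ)) h2

lemma le_topDigit_add_one {q : ℝ} (hq : 1 < q) : q ≤ topDigit q + 1 := by
  rw [topDigit_cast hq]
  linarith [Int.le_ceil q]

/-- Two remainder sequences whose first `n` digits agree drift apart by the factor `q ^ n`. -/
lemma rem_sub {q : ℝ} {u v : ℕ → ℝ} {c d : ℕ → ℕ} (hu : ∀ n, u (n + 1) = q * u n - c n)
    (hv : ∀ n, v (n + 1) = q * v n - d n) (n : ℕ) (h : ∀ i, i < n → c i = d i) :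
    u n - v n = q ^ n * (u 0 - v 0) := by
  induction n with
  | zero => simp
  | succ n ih =>
    have := ih fun i hi => h i (by omega)
    rw [hu, hv, h n (by omega), pow_succ]
    linear_combination q * this

/-- For remainders in `(0, 1]` the cap `topDigit q` on quasi-greedy digits is not active. -/
lemma qgDigit_eq {q y : ℝ} (hq : 1 < q) (h0 : 0 < y) (h1 : y ≤ 1) :
    (qgDigit q y : ℝ) = (⌈q * y⌉ : ℝ) - 1 := by
  have hpos : 0 < ⌈q * y⌉ := Int.ceil_pos.2 (by positivity)
  have hle : ⌈q * y⌉ ≤ (topDigit q : ℤ) + 1 := by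
    apply Int.ceil_le.2
    push_cast
    nlinarith [le_topDigit_add_one hq]
  have h2 : (qgDigit q y : ℤ) = ⌈q * y⌉ - 1 := by
    unfold qgDigit
    omega
  exact_mod_cast congrArg (fun z : ℤ => (z : ℝ)) h2

lemma qgRem_one_mem {q : ℝ} (hq : 1 < q) (n : ℕ) : 0 < qgRem q 1 n ∧ qgRem q 1 n ≤ 1 := by
  induction n with
  | zero => simp [qgRem]
  | succ n ih =>
    have h := qgDigit_eq hq ih.1 ih.2
    simp only [qgRem]
    rw [h]
    constructor
    · linarith [Int.ceil_lt_add_one (q * qgRem q 1 n)]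
    · linarith [Int.le_ceil (q * qgRem q 1 n)]

lemma gDigit_le {q y : ℝ} (hq : 1 < q) (h0 : 0 ≤ y) : (gDigit q y : ℝ) ≤ q * y :=
  (Nat.cast_le.2 (min_le_right _ _)).trans (Nat.floor_le (by positivity))

lemma gRem_nonneg {q x : ℝ} (hq : 1 < q) (hx : 0 ≤ x) (n : ℕ) : 0 ≤ gRem q x n := by
  induction n with
  | zero => exact hx
  | succ n ih => simpa [gRem] using gDigit_le hq ih

/-- The value of the tail of the digit sequence `b` that starts at index `n`. -/
noncomputable def tailVal (q : ℝ) (b : ℕ → ℕ) (n : ℕ) : ℝ := ∑' i : ℕ, (b (n + i) : ℝ) / q ^ (i + 1)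

lemma hasSum_top {q : ℝ} (hq : 1 < q) (m : ℝ) :
    HasSum (fun i : ℕ => m / q ^ (i + 1)) (m / (q - 1)) := by
  have h := (hasSum_geometric_of_lt_one (r := q⁻¹) (by positivity)
    (inv_lt_one_of_one_lt₀ hq)).mul_left (m / q)
  have hq0 : q ≠ 0 := by positivity
  have hq1 : q - 1 ≠ 0 := by linarith
  have hf : (fun i : ℕ => m / q ^ (i + 1)) = fun i : ℕ => m / q * q⁻¹ ^ i := by
    funext i
    rw [pow_succ, inv_pow]
    field_simp
  have hv : m / (q - 1) = m / q * (1 - q⁻¹)⁻¹ := by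
    have : 1 - q⁻¹ = (q - 1) / q := by field_simp
    rw [this]
    field_simp
  rw [hf, hv]
  exact h

section
variable {q : ℝ} {b : ℕ → ℕ}

lemma tail_term_le (hq : 1 < q) (hb : ∀ i, b i ≤ topDigit q) (n i : ℕ) :
    (b (n + i) : ℝ) / q ^ (i + 1) ≤ (topDigit q : ℝ) / q ^ (i + 1) := by
  have : (b (n + i) : ℝ) ≤ topDigit q := by exact_mod_cast hb _
  gcongr

lemma summable_tail (hq : 1 < q) (hb : ∀ i, b i ≤ topDigit q) (n : ℕ) :
    Summable (fun i : ℕ => (b (n + i) : ℝ) / q ^ (i + 1)) :=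
  Summable.of_nonneg_of_le (fun i => by positivity) (tail_term_le hq hb n)
    (hasSum_top hq (topDigit q)).summable

lemma tailVal_nonneg (hq : 1 < q) (n : ℕ) : 0 ≤ tailVal q b n :=
  tsum_nonneg fun i => by positivity

lemma tailVal_le (hq : 1 < q) (hb : ∀ i, b i ≤ topDigit q) (n : ℕ) :
    tailVal q b n ≤ topDigit q / (q - 1) := by
  rw [← (hasSum_top hq (topDigit q)).tsum_eq]
  exact (summable_tail hq hb n).tsum_le_tsum (tail_term_le hq hb n)
    (hasSum_top hq (topDigit q)).summable

lemma tailVal_succ (hq : 1 < q) (hb : ∀ i, b i ≤ topDigit q) (n : ℕ) :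
    tailVal q b (n + 1) = q * tailVal q b n - b n := by
  have hq0 : q ≠ 0 := by positivity
  have h : tailVal q b n = b n / q + tailVal q b (n + 1) / q := by
    unfold tailVal
    rw [(summable_tail hq hb n).tsum_eq_zero_add, ← tsum_div_const]
    simp only [add_zero, zero_add, pow_one]
    congr 1
    refine tsum_congr fun i => ?_
    rw [show n + (i + 1) = n + 1 + i by ring, pow_succ q (i + 1), div_div]
  rw [h]
  field_simp
  ring

/-- One comparison step: past the first position where the tail at `k` falls below `α`, the
excess over `1` is larger by at least the corresponding power of `q`. -/
lemma excess_step (hq : 1 < q) (hb : ∀ i, b i ≤ topDigit q) (k : ℕ)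
    (h : lexLt (fun i => b (k + i)) (alphaSeq q)) :
    ∃ j, b (k + j) < topDigit q ∧
      q ^ (j + 1) * (tailVal q b k - 1) < tailVal q b (k + j + 1) - 1 := by
  obtain ⟨j, heq, hlt⟩ := h
  have hα : alphaSeq q j ≤ topDigit q := min_le_left _ _
  refine ⟨j, lt_of_lt_of_le hlt hα, ?_⟩
  have hr := rem_sub (q := q) (u := fun i => tailVal q b (k + i)) (v := qgRem q 1)
    (c := fun i => b (k + i)) (d := alphaSeq q) (fun i => tailVal_succ hq hb (k + i))
    (fun i => rfl) j heq
  have hs : qgRem q 1 (j + 1) = q * qgRem q 1 j - alphaSeq q j := rfl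
  have hp := (qgRem_one_mem hq (j + 1)).1
  have hv := tailVal_succ hq hb (k + j)
  have hd : (b (k + j) : ℝ) + 1 ≤ alphaSeq q j := by exact_mod_cast hlt
  have h0 : qgRem q 1 0 = 1 := rfl
  simp only [add_zero, h0] at hr
  have : q ^ (j + 1) * (tailVal q b k - 1) = q * (tailVal q b (k + j) - qgRem q 1 j) := by
    rw [hr, pow_succ]
    ring
  rw [this]
  linarith

lemma tailVal_lt_one (hq : 1 < q) (hb : ∀ i, b i ≤ topDigit q)
    (H : ∀ n, b n < topDigit q → lexLt (fun i => b (n + 1 + i)) (alphaSeq q))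
    (n : ℕ) (hn : b n < topDigit q) : tailVal q b (n + 1) < 1 := by
  set C : ℝ := topDigit q / (q - 1)
  have hC : 0 ≤ C := div_nonneg (Nat.cast_nonneg _) (by linarith)
  have hbound : ∀ N n, b n < topDigit q → q ^ N * (tailVal q b (n + 1) - 1) ≤ C := by
    intro N
    induction N with
    | zero =>
      intro n _
      have := tailVal_le hq hb (n + 1)
      simp only [pow_zero, one_mul]
      linarith
    | succ N ih =>
      intro n hn
      rcases le_or_gt (tailVal q b (n + 1)) 1 with h | h
      · exact (mul_nonpos_of_nonneg_of_nonpos (by positivity) (by linarith)).trans hC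
      · obtain ⟨j, hj, hlt⟩ := excess_step hq hb (n + 1) (H n hn)
        have h1 : q ^ 1 ≤ q ^ (j + 1) := pow_le_pow_right₀ hq.le (by omega)
        have h2 : q * (tailVal q b (n + 1) - 1) ≤ tailVal q b (n + 1 + j + 1) - 1 := by
          nlinarith
        calc q ^ (N + 1) * (tailVal q b (n + 1) - 1)
            = q ^ N * (q * (tailVal q b (n + 1) - 1)) := by ring
          _ ≤ q ^ N * (tailVal q b (n + 1 + j + 1) - 1) := by gcongr
          _ ≤ C := ih _ hj
  have hle : ∀ n, b n < topDigit q → tailVal q b (n + 1) ≤ 1 := by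
    intro n hn
    by_contra! h
    obtain ⟨N, hN⟩ := pow_unbounded_of_one_lt (C / (tailVal q b (n + 1) - 1)) hq
    rw [div_lt_iff₀ (by linarith)] at hN
    linarith [hbound N n hn]
  obtain ⟨j, hj, hlt⟩ := excess_step hq hb (n + 1) (H n hn)
  have h1 := hle _ hj
  have hpow : 0 < q ^ (j + 1) := by positivity
  by_contra! h
  nlinarith [mul_nonneg hpow.le (sub_nonneg.2 h)]

lemma gDigit_tailVal (hq : 1 < q) (hb : ∀ i, b i ≤ topDigit q)
    (H : ∀ n, b n < topDigit q → tailVal q b (n + 1) < 1) (n : ℕ) :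
    gDigit q (tailVal q b n) = b n := by
  have hs : q * tailVal q b n = b n + tailVal q b (n + 1) := by
    linarith [tailVal_succ hq hb n]
  have h0 := tailVal_nonneg (b := b) hq (n + 1)
  have hle : b n ≤ ⌊q * tailVal q b n⌋₊ := Nat.le_floor (by linarith)
  unfold gDigit
  rcases (hb n).lt_or_eq with h | h
  · have : ⌊q * tailVal q b n⌋₊ < b n + 1 := by
      rw [Nat.floor_lt (by rw [hs]; positivity)]
      push_cast
      linarith [H n h]
    omega
  · omega

end

/-- Theorem 1.1(i), Parry. Let `q > 1` and `m` the largest integer smaller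
than `q`. A sequence `(b_i) ∈ {0,…,m}^ℕ` is the greedy expansion in base `q` of some `x ∈ J_q`
iff `b_{n+1} b_{n+2} … < α_1 α_2 …` whenever `b_n < m`. -/
theorem greedy_expansion_characterization (q : ℝ) (hq : 1 < q) (b : ℕ → ℕ)
    (hb : ∀ i, b i ≤ topDigit q) :
    (∃ x ∈ Jset q, ∀ n, greedy q x n = b n) ↔
      (∀ n, b n < topDigit q → lexLt (fun i => b (n + 1 + i)) (alphaSeq q)) := by
  constructor
  · rintro ⟨x, hx, hg⟩ n hn
    have hnn := gRem_nonneg hq hx.1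
    have hrec : ∀ i, gRem q x (i + 1) = q * gRem q x i - b i := fun i => by
      rw [← hg i]
      rfl
    have hy : gRem q x (n + 1) < 1 := by
      have hfl : b n = ⌊q * gRem q x n⌋₊ := by
        have : min (topDigit q) ⌊q * gRem q x n⌋₊ = b n := hg n
        omega
      rw [hrec, hfl]
      linarith [Nat.lt_floor_add_one (q * gRem q x n)]
    have hdiff := rem_sub (q := q) (u := qgRem q 1) (v := fun i => gRem q x (n + 1 + i))
      (c := alphaSeq q) (d := fun i => b (n + 1 + i)) (fun i => rfl)
      (fun i => hrec (n + 1 + i))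
    have h0 : qgRem q 1 0 = 1 := rfl
    simp only [add_zero, h0] at hdiff
    have hex : ∃ j, b (n + 1 + j) ≠ alphaSeq q j := by
      by_contra! hall
      obtain ⟨N, hN⟩ := pow_unbounded_of_one_lt (1 / (1 - gRem q x (n + 1))) hq
      rw [div_lt_iff₀ (by linarith)] at hN
      linarith [hdiff N fun i _ => (hall i).symm, (qgRem_one_mem hq N).2, hnn (n + 1 + N)]
    classical
    have hmin : ∀ i, i < Nat.find hex → b (n + 1 + i) = alphaSeq q i := fun i hi =>
      not_not.1 (Nat.find_min hex hi)
    refine ⟨Nat.find hex, hmin, lt_of_le_of_ne ?_ (Nat.find_spec hex)⟩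
    generalize Nat.find hex = j at hmin
    have hd := hdiff j fun i hi => (hmin i hi).symm
    have hlt : gRem q x (n + 1 + j) < qgRem q 1 j := by
      have : 0 < q ^ j * (1 - gRem q x (n + 1)) := mul_pos (by positivity) (by linarith)
      linarith
    have hbd : (b (n + 1 + j) : ℝ) ≤ q * gRem q x (n + 1 + j) := by
      rw [← hg]
      exact gDigit_le hq (hnn _)
    have hα : (alphaSeq q j : ℝ) = (⌈q * qgRem q 1 j⌉ : ℝ) - 1 :=
      qgDigit_eq hq (qgRem_one_mem hq j).1 (qgRem_one_mem hq j).2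
    have hfin : (b (n + 1 + j) : ℝ) < alphaSeq q j + 1 := by
      rw [hα]
      nlinarith [Int.le_ceil (q * qgRem q 1 j)]
    exact Nat.lt_succ_iff.1 (by exact_mod_cast hfin)
  · intro H
    have hdig := gDigit_tailVal hq hb (tailVal_lt_one hq hb H)
    refine ⟨tailVal q b 0, ⟨tailVal_nonneg hq 0, ?_⟩, ?_⟩
    · rw [← topDigit_cast hq]
      exact tailVal_le hq hb 0
    · have hrem : ∀ n, gRem q (tailVal q b 0) n = tailVal q b n := by
        intro n
        induction n with
        | zero => rfl
        | succ n ih => rw [gRem, ih, hdig, tailVal_succ hq hb]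
      intro n
      rw [greedy, hrem, hdig]
end

section
/- Let 1 < q < r be real numbers with ⌈q⌉ = ⌈r⌉. The following four statements are equivalent: (i) (q, r] ∩ U = ∅; (ii) (q, r] ∩ closure(U) = ∅; (iii) every sequence in U_r' ∖ U_q' is ultimately periodic; (iv) U_r' ∖ U_q' is countable. -/
/-- The tail of a sequence starting at index `k`. -/
def sh (k : ℕ) (c : ℕ → ℕ) : ℕ → ℕ := fun i => c (k + i)

/-- The reflection `M - c_i` of a digit sequence; only used when all digits are at most `M`. -/
def rf (M : ℕ) (c : ℕ → ℕ) : ℕ → ℕ := fun i => M - c i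

/-- The number represented by the digit sequence `c` in base `q`. -/
noncomputable def val (q : ℝ) (c : ℕ → ℕ) : ℝ := ∑' i : ℕ, (c i : ℝ) / q ^ (i + 1)

/-- `a < b` lexicographically, the first difference being at index `n`. -/
def ltAt (n : ℕ) (a b : ℕ → ℕ) : Prop := (∀ i, i < n → a i = b i) ∧ a n < b n

lemma sh_sh (k l : ℕ) (c : ℕ → ℕ) : sh k (sh l c) = sh (l + k) c := by
  funext i; simp [sh, add_assoc]

lemma sh_zero (c : ℕ → ℕ) : sh 0 c = c := by
  funext i; simp [sh]

lemma sh_rf (M k : ℕ) (c : ℕ → ℕ) : sh k (rf M c) = rf M (sh k c) := rfl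

lemma rf_rf {M : ℕ} {c : ℕ → ℕ} (hc : ∀ i, c i ≤ M) : rf M (rf M c) = c := by
  funext i; have := hc i; simp only [rf]; omega

lemma rf_le (M : ℕ) (c : ℕ → ℕ) : ∀ i, rf M c i ≤ M := fun _ => Nat.sub_le _ _

lemma sh_le {M k : ℕ} {c : ℕ → ℕ} (hc : ∀ i, c i ≤ M) : ∀ i, sh k c i ≤ M := fun _ => hc _

/-! ### The lexicographic order -/

lemma ltAt.lt {n : ℕ} {a b : ℕ → ℕ} (h : ltAt n a b) : lexLt a b := ⟨n, h⟩

lemma lexLt_irrefl (a : ℕ → ℕ) : ¬ lexLt a a := fun ⟨_, h⟩ => lt_irrefl _ h.2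

lemma lexLt_trans {a b c : ℕ → ℕ} (h1 : lexLt a b) (h2 : lexLt b c) : lexLt a c := by
  obtain ⟨n, h1, h1'⟩ := h1
  obtain ⟨m, h2, h2'⟩ := h2
  rcases lt_trichotomy n m with h | h | h
  · exact ⟨n, fun i hi => (h1 i hi).trans (h2 i (hi.trans h)), by rw [← h2 n h]; exact h1'⟩
  · subst h
    exact ⟨n, fun i hi => (h1 i hi).trans (h2 i hi), h1'.trans h2'⟩
  · exact ⟨m, fun i hi => (h1 i (hi.trans h)).trans (h2 i hi), by rw [h1 m h]; exact h2'⟩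

lemma lexLt_of_lt_of_le {a b c : ℕ → ℕ} (h1 : lexLt a b) (h2 : lexLe b c) : lexLt a c := by
  rcases h2 with h2 | rfl
  · exact lexLt_trans h1 h2
  · exact h1

lemma lexLt_of_le_of_lt {a b c : ℕ → ℕ} (h1 : lexLe a b) (h2 : lexLt b c) : lexLt a c := by
  rcases h1 with h1 | rfl
  · exact lexLt_trans h1 h2
  · exact h2

lemma exists_first_diff {a b : ℕ → ℕ} (h : a ≠ b) :
    ∃ n, (∀ i, i < n → a i = b i) ∧ a n ≠ b n := by
  classical
  have h' : ∃ n, a n ≠ b n := by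
    by_contra hh
    push Not at hh
    exact h (funext hh)
  refine ⟨Nat.find h', fun i hi => ?_, Nat.find_spec h'⟩
  simpa using Nat.find_min h' hi

lemma lex_trichotomy (a b : ℕ → ℕ) : lexLt a b ∨ a = b ∨ lexLt b a := by
  by_cases h : a = b
  · exact Or.inr (Or.inl h)
  · obtain ⟨n, h1, h2⟩ := exists_first_diff h
    rcases lt_or_gt_of_ne h2 with h3 | h3
    · exact Or.inl ⟨n, h1, h3⟩
    · exact Or.inr (Or.inr ⟨n, fun i hi => (h1 i hi).symm, h3⟩)

lemma lexLe_of_not_lt {a b : ℕ → ℕ} (h : ¬ lexLt a b) : lexLe b a := by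
  rcases lex_trichotomy a b with h1 | h1 | h1
  · exact absurd h1 h
  · exact Or.inr h1.symm
  · exact Or.inl h1

lemma not_lt_of_lexLe {a b : ℕ → ℕ} (h : lexLe b a) : ¬ lexLt a b :=
  fun h' => lexLt_irrefl _ (lexLt_of_lt_of_le h' h)

lemma lexLt_of_common_start {a b : ℕ → ℕ} (n : ℕ) (h : ∀ i, i < n → a i = b i)
    (h' : lexLt (sh n a) (sh n b)) : lexLt a b := by
  obtain ⟨m, h1, h2⟩ := h'
  refine ⟨n + m, fun i hi => ?_, h2⟩
  by_cases hin : i < n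
  · exact h i hin
  · have := h1 (i - n) (by omega)
    simp only [sh] at this
    rwa [show n + (i - n) = i by omega] at this

lemma ltAt.rf {M n : ℕ} {a b : ℕ → ℕ} (hb : ∀ i, b i ≤ M)
    (h : ltAt n a b) : ltAt n (rf M b) (rf M a) := by
  refine ⟨fun i hi => ?_, ?_⟩
  · simp only [_root_.rf, h.1 i hi]
  · have := h.2
    have := hb n
    simp only [_root_.rf]; omega

lemma lexLt.rf {M : ℕ} {a b : ℕ → ℕ} (hb : ∀ i, b i ≤ M)
    (h : lexLt a b) : lexLt (rf M b) (rf M a) := by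
  obtain ⟨n, h⟩ := h
  exact ⟨n, ltAt.rf hb h⟩

/-! ### Values of digit sequences -/

lemma val_summable {q : ℝ} {M : ℕ} {c : ℕ → ℕ} (hq : 1 < q) (hc : ∀ i, c i ≤ M) :
    Summable fun i : ℕ => (c i : ℝ) / q ^ (i + 1) := by
  have h1 : Summable fun i : ℕ => (M : ℝ) * (q⁻¹) ^ (i + 1) := by
    apply Summable.mul_left
    exact (summable_nat_add_iff 1).2
      (summable_geometric_of_lt_one (by positivity) (inv_lt_one_of_one_lt₀ hq))
  refine Summable.of_nonneg_of_le (fun i => by positivity) (fun i => ?_) h1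
  rw [inv_pow, ← div_eq_mul_inv]
  have : (c i : ℝ) ≤ M := by exact_mod_cast hc i
  gcongr

lemma val_step {q : ℝ} {M : ℕ} {c : ℕ → ℕ} (hq : 1 < q) (hc : ∀ i, c i ≤ M) :
    q * val q c = c 0 + val q (sh 1 c) := by
  have h0 : q ≠ 0 := by positivity
  unfold val
  rw [(val_summable hq hc).tsum_eq_zero_add, mul_add, ← tsum_mul_left]
  congr 1
  · field_simp
    simp [mul_comm]
  · refine tsum_congr fun i => ?_
    simp only [sh, add_comm 1 i]
    field_simp
    ring

lemma val_step' {q : ℝ} {M : ℕ} {c : ℕ → ℕ} (hq : 1 < q) (hc : ∀ i, c i ≤ M) (k : ℕ) :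
    q * val q (sh k c) = c k + val q (sh (k + 1) c) := by
  rw [val_step hq (sh_le hc), sh_sh]
  simp [sh]

lemma val_nonneg {q : ℝ} (c : ℕ → ℕ) (hq : 1 < q) : 0 ≤ val q c :=
  tsum_nonneg fun i => by positivity

lemma val_const {q : ℝ} (hq : 1 < q) (M : ℕ) : val q (fun _ => M) = M / (q - 1) := by
  have h := val_step (M := M) (c := fun _ => M) hq (fun _ => le_rfl)
  have h2 : sh 1 (fun _ => M) = fun _ => M := rfl
  rw [h2] at h
  have : q - 1 ≠ 0 := by linarith
  field_simp
  linarith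

lemma val_rf {q : ℝ} {M : ℕ} {c : ℕ → ℕ} (hq : 1 < q) (hc : ∀ i, c i ≤ M) :
    val q (rf M c) = M / (q - 1) - val q c := by
  rw [← val_const hq M]
  unfold val
  rw [← (val_summable hq (fun _ => le_refl M)).tsum_sub (val_summable hq hc)]
  refine tsum_congr fun i => ?_
  simp only [rf, Nat.cast_sub (hc i)]
  ring

lemma val_le {q : ℝ} {M : ℕ} {c : ℕ → ℕ} (hq : 1 < q) (hc : ∀ i, c i ≤ M) :
    val q c ≤ M / (q - 1) := by
  have := val_rf hq hc
  have := val_nonneg (rf M c) hq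
  linarith

lemma val_term_le {q : ℝ} {M : ℕ} {c : ℕ → ℕ} (hq : 1 < q) (hc : ∀ i, c i ≤ M) (s : Finset ℕ) :
    ∑ i ∈ s, (c i : ℝ) / q ^ (i + 1) ≤ val q c :=
  (val_summable hq hc).sum_le_tsum s (fun i _ => by positivity)

lemma val_pos {q : ℝ} {M : ℕ} {c : ℕ → ℕ} (hq : 1 < q) (hc : ∀ i, c i ≤ M) {n : ℕ}
    (hn : c n ≠ 0) : 0 < val q c := by
  refine lt_of_lt_of_le ?_ (val_term_le hq hc {n})
  have : 0 < c n := Nat.pos_of_ne_zero hn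
  rw [Finset.sum_singleton]
  positivity

lemma val_antitone {q r : ℝ} {M : ℕ} {c : ℕ → ℕ} (hq : 1 < q) (hqr : q ≤ r)
    (hc : ∀ i, c i ≤ M) : val r c ≤ val q c := by
  refine (val_summable (hq.trans_le hqr) hc).tsum_le_tsum (fun i => ?_) (val_summable hq hc)
  gcongr

lemma val_sub {q : ℝ} {M : ℕ} {c d : ℕ → ℕ} (hq : 1 < q) (hc : ∀ i, c i ≤ M)
    (hd : ∀ i, d i ≤ M) (n : ℕ) (h : ∀ i, i < n → c i = d i) :
    q ^ n * (val q c - val q d) = val q (sh n c) - val q (sh n d) := by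
  induction n with
  | zero => simp [sh_zero]
  | succ n ih =>
    have h1 := ih fun i hi => h i (by omega)
    have h2 := val_step' hq hc n
    have h3 := val_step' hq hd n
    have h4 : (c n : ℝ) = d n := by rw [h n (by omega)]
    rw [pow_succ, mul_comm (q ^ n) q, mul_assoc, h1]
    linarith

/-- Comparison of the values of two sequences that agree before index `n`. -/
lemma val_sub' {q : ℝ} {M : ℕ} {c d : ℕ → ℕ} (hq : 1 < q) (hc : ∀ i, c i ≤ M)
    (hd : ∀ i, d i ≤ M) (n : ℕ) (h : ∀ i, i < n → c i = d i) :
    q ^ (n + 1) * (val q c - val q d) =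
      (c n - d n) + (val q (sh (n + 1) c) - val q (sh (n + 1) d)) := by
  have h1 := val_sub hq hc hd n h
  have h2 := val_step' hq hc n
  have h3 := val_step' hq hd n
  rw [pow_succ, mul_comm (q ^ n) q, mul_assoc, h1]
  linarith

/-- If every remainder in a bounded set `I` admits a digit leading to a remainder in `I`, then every
element of `I` has an expansion all of whose remainders are in `I`. -/
lemma exists_val_of_invariant {q B : ℝ} {M : ℕ} (hq : 1 < q) (I : Set ℝ)
    (hB : ∀ y ∈ I, |y| ≤ B) (hI : ∀ y ∈ I, ∃ d : ℕ, d ≤ M ∧ q * y - d ∈ I) {x : ℝ} (hx : x ∈ I) :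
    ∃ c : ℕ → ℕ, (∀ i, c i ≤ M) ∧ val q c = x ∧ ∀ k, val q (sh k c) ∈ I := by
  choose f hf using hI
  let R : ℕ → I := fun n => Nat.rec ⟨x, hx⟩ (fun _ y => ⟨q * y.1 - f y.1 y.2, (hf y.1 y.2).2⟩) n
  let c : ℕ → ℕ := fun n => f (R n).1 (R n).2
  have hR : ∀ n, ((R (n + 1) : I) : ℝ) = q * (R n).1 - c n := fun n => rfl
  have hc : ∀ i, c i ≤ M := fun i => (hf _ _).1
  have hdiff : ∀ k n, q ^ n * (val q (sh k c) - (R k).1) = val q (sh (k + n) c) - (R (k + n)).1 := by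
    intro k n
    induction n with
    | zero => simp
    | succ n ih =>
      have h2 := val_step' hq hc (k + n)
      have h3 := hR (k + n)
      rw [← add_assoc, h3, pow_succ, mul_comm (q ^ n) q, mul_assoc, ih]
      linarith
  have key : ∀ k, val q (sh k c) = (R k).1 := by
    intro k
    by_contra hne
    have hpos : 0 < |val q (sh k c) - (R k).1| := abs_pos.2 (sub_ne_zero.2 hne)
    obtain ⟨n, hn⟩ := pow_unbounded_of_one_lt
      ((M / (q - 1) + B) / |val q (sh k c) - (R k).1|) hq
    rw [div_lt_iff₀ hpos] at hn
    have h1 := congrArg abs (hdiff k n)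
    rw [abs_mul, abs_of_pos (pow_pos (by linarith : (0:ℝ) < q) n)] at h1
    have h2 := abs_sub (val q (sh (k + n) c)) (R (k + n)).1
    have h3 := hB _ (R (k + n)).2
    rw [abs_of_nonneg (val_nonneg _ hq)] at h2
    have h4 := val_le hq (sh_le (k := k + n) hc)
    linarith
  refine ⟨c, hc, ?_, fun k => ?_⟩
  · have := key 0
    rwa [sh_zero] at this
  · rw [key]; exact (R k).2

/-! ### The quasi-greedy expansion of `1` -/

/-- `a` is the quasi-greedy expansion of `1` in base `q` with digits at most `M`: an expansion of
`1` all of whose remainders are in `(0, 1]`. -/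
def QG (q : ℝ) (M : ℕ) (a : ℕ → ℕ) : Prop :=
  (∀ i, a i ≤ M) ∧ val q a = 1 ∧ ∀ k, val q (sh k a) ∈ Set.Ioc (0 : ℝ) 1

lemma one_lt_base {q : ℝ} {M : ℕ} (hM : 1 ≤ M) (h1 : (M : ℝ) < q) : 1 < q :=
  lt_of_le_of_lt (by exact_mod_cast hM) h1

lemma exists_QG {q : ℝ} {M : ℕ} (hM : 1 ≤ M) (h1 : (M : ℝ) < q) (h2 : q ≤ M + 1) :
    ∃ a, QG q M a := by
  have hq := one_lt_base hM h1
  obtain ⟨a, ha1, ha2, ha3⟩ := exists_val_of_invariant (M := M) (B := 1) hq (Set.Ioc (0 : ℝ) 1)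
    (fun y hy => by rw [abs_of_pos hy.1]; exact hy.2) (fun y hy => by
      have hpos : 0 < q * y := mul_pos (by linarith) hy.1
      have hle : q * y ≤ M + 1 := by nlinarith [hy.2, hy.1]
      have hc1 : 0 < ⌈q * y⌉₊ := Nat.ceil_pos.2 hpos
      have hc2 : ⌈q * y⌉₊ ≤ M + 1 := Nat.ceil_le.2 (by exact_mod_cast hle)
      have hc3 := Nat.le_ceil (q * y)
      have hc4 := Nat.ceil_lt_add_one hpos.le
      refine ⟨⌈q * y⌉₊ - 1, by omega, ?_⟩
      rw [Nat.cast_sub hc1, Nat.cast_one]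
      constructor <;> linarith) (x := 1) (by norm_num)
  exact ⟨a, ha1, ha2, ha3⟩

lemma exists_val_eq {q x : ℝ} {M : ℕ} (hM : 1 ≤ M) (h1 : (M : ℝ) < q) (h2 : q ≤ M + 1)
    (hx0 : 0 ≤ x) (hx1 : x ≤ M / (q - 1)) : ∃ c : ℕ → ℕ, (∀ i, c i ≤ M) ∧ val q c = x := by
  have hq := one_lt_base hM h1
  have hq1 : 0 < q - 1 := by linarith
  have hge : 1 ≤ M / (q - 1) := by rw [le_div_iff₀ hq1]; linarith
  have hfix : q * (M / (q - 1)) = M / (q - 1) + M := by field_simp; ring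
  obtain ⟨a, ha1, ha2, -⟩ := exists_val_of_invariant (M := M) (B := M / (q - 1)) hq
    (Set.Icc (0 : ℝ) (M / (q - 1)))
    (fun y hy => by rw [abs_of_nonneg hy.1]; exact hy.2) (fun y hy => by
      have hnn : 0 ≤ q * y := mul_nonneg (by linarith) hy.1
      by_cases hy2 : q * y < M + 1
      · have hc1 := Nat.floor_le hnn
        have hc2 := Nat.lt_floor_add_one (q * y)
        refine ⟨⌊q * y⌋₊, ?_, ?_⟩
        · have : ⌊q * y⌋₊ < M + 1 := (Nat.floor_lt hnn).2 (by exact_mod_cast hy2)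
          omega
        · constructor <;> linarith
      · refine ⟨M, le_rfl, ?_⟩
        have := mul_le_mul_of_nonneg_left hy.2 (by linarith : (0 : ℝ) ≤ q)
        constructor <;> linarith) (x := x) ⟨hx0, hx1⟩
  exact ⟨a, ha1, ha2⟩

lemma QG.unique {q : ℝ} {M : ℕ} {a b : ℕ → ℕ} (hq : 1 < q) (ha : QG q M a) (hb : QG q M b) :
    a = b := by
  have key : ∀ {a b : ℕ → ℕ}, QG q M a → QG q M b → ¬ lexLt a b := by
    rintro a b ha hb ⟨n, h1, h2⟩
    have h3 := val_sub' hq ha.1 hb.1 n h1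
    rw [ha.2.1, hb.2.1, sub_self, mul_zero] at h3
    have h4 : (a n : ℝ) + 1 ≤ b n := by exact_mod_cast h2
    have h5 := (ha.2.2 (n + 1)).2
    have h6 := (hb.2.2 (n + 1)).1
    linarith
  rcases lex_trichotomy a b with h | h | h
  · exact absurd h (key ha hb)
  · exact h
  · exact absurd h (key hb ha)

lemma QG.one_le_val {q : ℝ} {M : ℕ} {a d : ℕ → ℕ} (hq : 1 < q) (ha : QG q M a)
    (hd : ∀ i, d i ≤ M) (h : lexLe a d) : 1 ≤ val q d := by
  rcases h with ⟨n, h1, h2⟩ | rfl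
  · have h3 := val_sub' hq ha.1 hd n h1
    rw [ha.2.1] at h3
    have h4 : (a n : ℝ) + 1 ≤ d n := by exact_mod_cast h2
    have h5 := (ha.2.2 (n + 1)).2
    have h6 := val_nonneg (sh (n + 1) d) hq
    have h7 : 0 < q ^ (n + 1) := pow_pos (by linarith) _
    by_contra hlt
    have : 0 < q ^ (n + 1) * (1 - val q d) := mul_pos h7 (by linarith)
    linarith
  · exact ha.2.1.ge

lemma QG.lexLt_of_val {q : ℝ} {M : ℕ} {a d : ℕ → ℕ} (hq : 1 < q) (ha : QG q M a)
    (hd : ∀ i, d i ≤ M) (h : val q d < 1) : lexLt d a := by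
  by_contra hn
  have := ha.one_le_val hq hd (lexLe_of_not_lt hn)
  linarith

lemma QG.sh_le {q : ℝ} {M : ℕ} {a : ℕ → ℕ} (hq : 1 < q) (ha : QG q M a) (k : ℕ) :
    lexLe (sh k a) a := by
  rcases (ha.2.2 k).2.lt_or_eq with h | h
  · exact Or.inl (ha.lexLt_of_val hq (_root_.sh_le ha.1) h)
  · refine Or.inr (QG.unique hq ⟨_root_.sh_le ha.1, h, fun l => ?_⟩ ha)
    rw [sh_sh]; exact ha.2.2 _

lemma QG.zero_eq {q : ℝ} {M : ℕ} {a : ℕ → ℕ} (hM : 1 ≤ M) (h1 : (M : ℝ) < q) (ha : QG q M a) :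
    a 0 = M := by
  have hq := one_lt_base hM h1
  have h3 := val_step hq ha.1
  rw [ha.2.1] at h3
  have h4 := (ha.2.2 1).2
  have h5 : (M : ℝ) < a 0 + 1 := by linarith
  have h6 : M < a 0 + 1 := by exact_mod_cast h5
  have := ha.1 0
  omega

lemma QG.mono {q r : ℝ} {M : ℕ} {a b : ℕ → ℕ} (hM : 1 ≤ M) (h1 : (M : ℝ) < q) (hqr : q < r)
    (ha : QG q M a) (hb : QG r M b) : lexLt a b := by
  have hq := one_lt_base hM h1
  have hr := hq.trans hqr
  refine hb.lexLt_of_val hr ha.1 ?_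
  have h3 := val_step hq ha.1
  have h3' := val_step hr ha.1
  have h4 := val_antitone hq hqr.le (_root_.sh_le (k := 1) ha.1)
  rw [ha.2.1] at h3
  nlinarith

/-- A set of sequences that is closed under passing to the tail after the first place where a
sequence drops below `a` only contains sequences of value at most `val q a = 1`. The excess over `1`
is divided by at least `q` each time such a tail is taken. -/
lemma val_le_one_of_set {q : ℝ} {M : ℕ} {a : ℕ → ℕ} (hq : 1 < q) (ha : ∀ i, a i ≤ M)
    (ha1 : val q a = 1) (S : Set (ℕ → ℕ)) (hS : ∀ d ∈ S, ∀ i, d i ≤ M)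
    (h : ∀ d ∈ S, d = a ∨ ∃ n, ltAt n d a ∧ sh (n + 1) d ∈ S) : ∀ d ∈ S, val q d ≤ 1 := by
  have hB : 0 ≤ (M : ℝ) / (q - 1) := div_nonneg (by positivity) (by linarith)
  have key : ∀ K : ℕ, ∀ d ∈ S, q ^ K * (val q d - 1) ≤ M / (q - 1) := by
    intro K
    induction K with
    | zero =>
      intro d hd
      have := val_le hq (hS d hd)
      simp only [pow_zero, one_mul]; linarith
    | succ K ih =>
      intro d hd
      rcases h d hd with rfl | ⟨n, hn, hn'⟩
      · rw [ha1, sub_self, mul_zero]; exact hB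
      · have h1 := val_sub' hq (hS d hd) ha n hn.1
        have h2 := ih _ hn'
        have h3 : (d n : ℝ) + 1 ≤ a n := by exact_mod_cast hn.2
        have h4 := val_nonneg (sh (n + 1) a) hq
        rw [ha1] at h1
        by_cases hpos : 0 < val q d - 1
        · have hK : 0 < q ^ K := pow_pos (by linarith) _
          have h5 : q ≤ q ^ (n + 1) := le_self_pow₀ hq.le (by omega)
          calc q ^ (K + 1) * (val q d - 1) = q ^ K * (q * (val q d - 1)) := by ring
            _ ≤ q ^ K * (q ^ (n + 1) * (val q d - 1)) := by gcongr
            _ ≤ q ^ K * (val q (sh (n + 1) d) - 1) := by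
              apply mul_le_mul_of_nonneg_left _ hK.le
              linarith
            _ ≤ _ := h2
        · refine le_trans ?_ hB
          exact mul_nonpos_of_nonneg_of_nonpos (pow_nonneg (by linarith) _) (by linarith)
  intro d hd
  by_contra hlt
  have hpos : 0 < val q d - 1 := by linarith
  obtain ⟨n, hn⟩ := pow_unbounded_of_one_lt (M / (q - 1) / (val q d - 1)) hq
  rw [div_lt_iff₀ hpos] at hn
  linarith [key n d hd]

lemma QG.val_lt_one {q : ℝ} {M : ℕ} {a c : ℕ → ℕ} (hq : 1 < q) (ha : QG q M a)
    (hc : ∀ i, c i ≤ M) (h : ∀ n, c n < M → lexLt (sh (n + 1) c) a) :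
    ∀ n, c n < M → val q (sh (n + 1) c) < 1 := by
  have hstep : ∀ n, c n < M → ∃ k, ltAt k (sh (n + 1) c) a ∧ c (n + 1 + k) < M := by
    intro n hn
    obtain ⟨k, hk⟩ := h n hn
    exact ⟨k, hk, lt_of_lt_of_le hk.2 (ha.1 k)⟩
  have hle := val_le_one_of_set hq ha.1 ha.2.1 {d | ∃ n, c n < M ∧ d = sh (n + 1) c}
    (by rintro d ⟨n, -, rfl⟩; exact _root_.sh_le hc)
    (by
      rintro d ⟨n, hn, rfl⟩
      obtain ⟨k, hk, hk'⟩ := hstep n hn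
      exact Or.inr ⟨k, hk, _, hk', by rw [sh_sh]; congr 1⟩)
  intro n hn
  obtain ⟨k, hk, hk'⟩ := hstep n hn
  have h1 := val_sub' hq (_root_.sh_le (k := n + 1) hc) ha.1 k hk.1
  have h2 := hle _ ⟨_, hk', rfl⟩
  rw [sh_sh, ha.2.1] at h1
  rw [add_assoc (n + 1) k 1] at h2
  have h3 : (sh (n + 1) c k : ℝ) + 1 ≤ a k := by exact_mod_cast hk.2
  have h4 := (ha.2.2 (k + 1)).1
  have h7 : 0 < q ^ (k + 1) := pow_pos (by linarith) _
  by_contra hlt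
  have : 0 ≤ q ^ (k + 1) * (val q (sh (n + 1) c) - 1) := mul_nonneg h7.le (by linarith)
  linarith

/-! ### Univoque sequences and univoque bases -/

lemma natCast_lt_base {q : ℝ} {M n : ℕ} (h1 : (M : ℝ) < q) (h2 : q ≤ M + 1) :
    (n : ℝ) < q ↔ n ≤ M := by
  constructor
  · intro h
    have : (n : ℝ) < (M + 1 : ℕ) := by push_cast; linarith
    have : n < M + 1 := by exact_mod_cast this
    omega
  · intro h
    have : (n : ℝ) ≤ M := by exact_mod_cast h
    linarith

lemma isExpansion_iff {q x : ℝ} {M : ℕ} {c : ℕ → ℕ} (h1 : (M : ℝ) < q) (h2 : q ≤ M + 1) :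
    IsExpansion q c x ↔ (∀ i, c i ≤ M) ∧ val q c = x := by
  unfold IsExpansion val
  simp only [natCast_lt_base h1 h2, eq_comm]

/-- The digit `c n` can be replaced by `t` without changing the value, provided that the remainder
left after `t` is representable. -/
lemma exists_splice {q : ℝ} {M : ℕ} {c : ℕ → ℕ} (hM : 1 ≤ M) (h1 : (M : ℝ) < q) (h2 : q ≤ M + 1)
    (hc : ∀ i, c i ≤ M) (n t : ℕ) (ht : t ≤ M)
    (h3 : 0 ≤ c n + val q (sh (n + 1) c) - t)
    (h4 : c n + val q (sh (n + 1) c) - t ≤ M / (q - 1)) :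
    ∃ d : ℕ → ℕ, (∀ i, d i ≤ M) ∧ val q d = val q c ∧ d n = t := by
  have hq := one_lt_base hM h1
  obtain ⟨e, he, hev⟩ := exists_val_eq hM h1 h2 h3 h4
  let d : ℕ → ℕ := fun i => if i < n then c i else if i = n then t else e (i - (n + 1))
  have hd : ∀ i, d i ≤ M := by
    intro i
    simp only [d]
    split_ifs
    · exact hc i
    · exact ht
    · exact he _
  have hdn : d n = t := by simp [d]
  have hsh : sh (n + 1) d = e := by
    funext i
    have e1 : ¬ (n + 1 + i < n) := by omega
    have e2 : ¬ (n + 1 + i = n) := by omega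
    simp only [sh, d, e1, e2, if_false]
    congr 1; omega
  refine ⟨d, hd, ?_, hdn⟩
  have h5 := val_sub' hq hd hc n (fun i hi => by simp [d, hi])
  rw [hsh, hev, hdn] at h5
  have h6 : q ^ (n + 1) * (val q d - val q c) = 0 := by rw [h5]; ring
  rcases mul_eq_zero.1 h6 with h7 | h7
  · exact absurd h7 (pow_pos (by linarith) _).ne'
  · linarith

/-- A sequence is univoque iff no digit can be raised or lowered by one. -/
lemma mem_USeq_iff {q : ℝ} {M : ℕ} {c : ℕ → ℕ} (hM : 1 ≤ M) (h1 : (M : ℝ) < q) (h2 : q ≤ M + 1) :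
    c ∈ USeq q ↔ (∀ i, c i ≤ M) ∧ (∀ n, c n < M → val q (sh (n + 1) c) < 1) ∧
      (∀ n, 0 < c n → val q (rf M (sh (n + 1) c)) < 1) := by
  have hq := one_lt_base hM h1
  constructor
  · rintro ⟨x, hx, hu⟩
    rw [isExpansion_iff h1 h2] at hx
    obtain ⟨hc, hx⟩ := hx
    have key : ∀ n t, t ≤ M → t ≠ c n → 0 ≤ c n + val q (sh (n + 1) c) - t →
        c n + val q (sh (n + 1) c) - t ≤ M / (q - 1) → False := by
      intro n t ht htc h3 h4
      obtain ⟨d, hd, hdv, hdn⟩ := exists_splice hM h1 h2 hc n t ht h3 h4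
      have := hu d ((isExpansion_iff h1 h2).2 ⟨hd, hdv.trans hx⟩)
      exact htc (by rw [← hdn, this])
    refine ⟨hc, fun n hn => ?_, fun n hn => ?_⟩
    · by_contra hlt
      have h3 := val_le hq (sh_le (k := n + 1) hc)
      refine key n (c n + 1) hn (by omega) ?_ ?_ <;> push_cast <;> linarith
    · rw [val_rf hq (sh_le hc)]
      by_contra hlt
      have h3 := val_nonneg (sh (n + 1) c) hq
      have h4 : ((c n - 1 : ℕ) : ℝ) = c n - 1 := by rw [Nat.cast_sub hn]; simp
      refine key n (c n - 1) (by have := hc n; omega) (by omega) ?_ ?_ <;> rw [h4] <;> linarith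
  · rintro ⟨hc, hup, hdown⟩
    refine ⟨val q c, (isExpansion_iff h1 h2).2 ⟨hc, rfl⟩, fun d hd => ?_⟩
    rw [isExpansion_iff h1 h2] at hd
    obtain ⟨hd, hdv⟩ := hd
    by_contra hne
    obtain ⟨n, hn1, hn2⟩ := exists_first_diff hne
    have h3 := val_sub' hq hd hc n hn1
    rw [hdv, sub_self, mul_zero] at h3
    rcases lt_or_gt_of_ne hn2 with h4 | h4
    · have h5 := hdown n (by omega)
      rw [val_rf hq (sh_le hc)] at h5
      have h6 := val_le hq (sh_le (k := n + 1) hd)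
      have h7 : (d n : ℝ) + 1 ≤ c n := by exact_mod_cast h4
      linarith
    · have h5 := hup n (lt_of_lt_of_le h4 (hd n))
      have h6 := val_nonneg (sh (n + 1) d) hq
      have h7 : (c n : ℝ) + 1 ≤ d n := by exact_mod_cast h4
      linarith

lemma mem_USeq_of_lex {q : ℝ} {M : ℕ} {a c : ℕ → ℕ} (hM : 1 ≤ M) (h1 : (M : ℝ) < q)
    (h2 : q ≤ M + 1) (ha : QG q M a) (hc : ∀ i, c i ≤ M)
    (hup : ∀ n, c n < M → lexLt (sh (n + 1) c) a)
    (hdown : ∀ n, 0 < c n → lexLt (rf M (sh (n + 1) c)) a) : c ∈ USeq q := by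
  have hq := one_lt_base hM h1
  rw [mem_USeq_iff hM h1 h2]
  refine ⟨hc, ha.val_lt_one hq hc hup, fun n hn => ?_⟩
  have h3 := ha.val_lt_one hq (rf_le M c) (fun n hn => by
    rw [sh_rf]; exact hdown n (by simp only [rf] at hn; omega)) n
    (by simp only [rf]; have := hc n; omega)
  rwa [sh_rf] at h3

lemma rf_mem_USeq {q : ℝ} {M : ℕ} {c : ℕ → ℕ} (hM : 1 ≤ M) (h1 : (M : ℝ) < q) (h2 : q ≤ M + 1)
    (h : c ∈ USeq q) : rf M c ∈ USeq q := by
  rw [mem_USeq_iff hM h1 h2] at h ⊢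
  refine ⟨rf_le M c, fun n hn => ?_, fun n hn => ?_⟩
  · exact h.2.2 n (by simp only [rf] at hn; omega)
  · rw [sh_rf, rf_rf (sh_le h.1)]
    exact h.2.1 n (by simp only [rf] at hn; omega)

lemma USeq_mono {q r : ℝ} {M : ℕ} (hM : 1 ≤ M) (h1 : (M : ℝ) < q) (hqr : q ≤ r)
    (h2 : r ≤ M + 1) : USeq q ⊆ USeq r := by
  have hq := one_lt_base hM h1
  intro c hc
  rw [mem_USeq_iff hM h1 (hqr.trans h2)] at hc
  rw [mem_USeq_iff hM (h1.trans_le hqr) h2]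
  exact ⟨hc.1, fun n hn => (val_antitone hq hqr (sh_le hc.1)).trans_lt (hc.2.1 n hn),
    fun n hn => (val_antitone hq hqr (rf_le M _)).trans_lt (hc.2.2 n hn)⟩

/-- In a univoque sequence all tails after a digit smaller than `M` have value less than `1`. -/
lemma USeq.val_tail_lt {q : ℝ} {M : ℕ} {c : ℕ → ℕ} (hM : 1 ≤ M) (h1 : (M : ℝ) < q)
    (h2 : q ≤ M + 1) (h : c ∈ USeq q) {n : ℕ} (hn : c n < M) (m : ℕ) :
    val q (sh (n + 1 + m) c) < 1 := by
  have hq := one_lt_base hM h1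
  rw [mem_USeq_iff hM h1 h2] at h
  induction m with
  | zero => exact h.2.1 n hn
  | succ m ih =>
    rcases (h.1 (n + 1 + m)).lt_or_eq with h3 | h3
    · exact h.2.1 _ h3
    · have h4 := val_step' hq h.1 (n + 1 + m)
      rw [h3] at h4
      rw [← add_assoc]
      nlinarith

lemma USeq.val_rf_tail_lt {q : ℝ} {M : ℕ} {c : ℕ → ℕ} (hM : 1 ≤ M) (h1 : (M : ℝ) < q)
    (h2 : q ≤ M + 1) (h : c ∈ USeq q) {n : ℕ} (hn : 0 < c n) (m : ℕ) :
    val q (rf M (sh (n + 1 + m) c)) < 1 := by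
  have h3 := ((mem_USeq_iff hM h1 h2).1 h).1 n
  exact USeq.val_tail_lt hM h1 h2 (rf_mem_USeq hM h1 h2 h) (n := n)
    (by simp only [rf]; omega) m

lemma mem_UnivBases_iff {q : ℝ} {M : ℕ} {a : ℕ → ℕ} (hM : 1 ≤ M) (h1 : (M : ℝ) < q)
    (h2 : q ≤ M + 1) (ha : QG q M a) : q ∈ UnivBases ↔ a ∈ USeq q := by
  have hq := one_lt_base hM h1
  have hex : IsExpansion q a 1 := (isExpansion_iff h1 h2).2 ⟨ha.1, ha.2.1⟩
  constructor
  · rintro ⟨-, c, hc, hu⟩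
    refine ⟨1, hex, fun d hd => ?_⟩
    rw [hu d hd, hu a hex]
  · rintro ⟨x, hx, hu⟩
    rw [isExpansion_iff h1 h2, ha.2.1] at hx
    rw [← hx.2] at hu
    exact ⟨hq, a, hex, hu⟩

lemma UnivBases.rf_tail {q : ℝ} {M : ℕ} {a : ℕ → ℕ} (hM : 1 ≤ M) (h1 : (M : ℝ) < q)
    (h2 : q ≤ M + 1) (ha : QG q M a) (h : q ∈ UnivBases) {k : ℕ} (hk : 1 ≤ k) :
    val q (rf M (sh k a)) < 1 := by
  have h3 := USeq.val_rf_tail_lt hM h1 h2 ((mem_UnivBases_iff hM h1 h2 ha).1 h) (n := 0)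
    (by rw [ha.zero_eq hM h1]; omega) (k - 1)
  rwa [show 0 + 1 + (k - 1) = k by omega] at h3

/-- The sequences `c` with `c_0 = M` whose proper tails are strictly between the reflection of `c`
and `c`. They are the quasi-greedy expansions of `1` in univoque bases in `(M, M + 1)`. -/
def Strict (M : ℕ) (c : ℕ → ℕ) : Prop :=
  (∀ i, c i ≤ M) ∧ c 0 = M ∧ ∀ k, 1 ≤ k → lexLt (sh k c) c ∧ lexLt (rf M (sh k c)) c

lemma continuousOn_val {p : ℝ} {M : ℕ} {c : ℕ → ℕ} (hp : 1 < p) (hc : ∀ i, c i ≤ M) :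
    ContinuousOn (fun x => val x c) (Set.Ici p) := by
  unfold val
  refine continuousOn_tsum (u := fun i => (c i : ℝ) / p ^ (i + 1)) (fun i => ?_)
    (val_summable hp hc) (fun i x hx => ?_)
  · refine ContinuousOn.div (by fun_prop) (by fun_prop) fun x hx => ?_
    have : 0 < x := by linarith [Set.mem_Ici.1 hx]
    positivity
  · have hx' := Set.mem_Ici.1 hx
    rw [Real.norm_of_nonneg (div_nonneg (by positivity) (pow_nonneg (by linarith) _))]
    gcongr

lemma exists_base_val_eq_one {M : ℕ} {c : ℕ → ℕ} (hM : 1 ≤ M) (hc : ∀ i, c i ≤ M)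
    (h0 : c 0 = M) {j : ℕ} (hj : 1 ≤ j) (hcj : c j ≠ 0) :
    ∃ p : ℝ, (M : ℝ) < p ∧ p ≤ M + 1 ∧ val p c = 1 := by
  have hM' : (1 : ℝ) ≤ M := by exact_mod_cast hM
  obtain ⟨p, hp1, hp2, hp3⟩ : ∃ p : ℝ, (M : ℝ) < p ∧ p ≤ M + 1 ∧
      1 < (M : ℝ) / p + 1 / p ^ (j + 1) := by
    have hcont : ContinuousAt (fun x : ℝ => (M : ℝ) / x + 1 / x ^ (j + 1)) M := by
      have : (M : ℝ) ≠ 0 := by positivity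
      have : (M : ℝ) ^ (j + 1) ≠ 0 := by positivity
      fun_prop (disch := assumption)
    have h1 : (1 : ℝ) < (M : ℝ) / M + 1 / (M : ℝ) ^ (j + 1) := by
      rw [div_self (by positivity)]
      have : 0 < 1 / (M : ℝ) ^ (j + 1) := by positivity
      linarith
    have h2 := hcont.eventually (lt_mem_nhds h1)
    have h3 : ∀ᶠ x in nhdsWithin (M : ℝ) (Set.Ioi (M : ℝ)),
        1 < (M : ℝ) / x + 1 / x ^ (j + 1) := h2.filter_mono nhdsWithin_le_nhds
    have h4 : Set.Ioc (M : ℝ) (M + 1) ∈ nhdsWithin (M : ℝ) (Set.Ioi (M : ℝ)) :=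
      Ioc_mem_nhdsGT (by linarith)
    obtain ⟨x, hx, hx'⟩ := (h3.and h4).exists
    exact ⟨x, hx'.1, hx'.2, hx⟩
  have hp : 1 < p := by linarith
  have hval : 1 ≤ val p c := by
    refine le_trans ?_ (val_term_le hp hc {0, j})
    rw [Finset.sum_pair (by omega), h0]
    have : (1 : ℝ) ≤ c j := by exact_mod_cast Nat.one_le_iff_ne_zero.2 hcj
    have h5 : 1 / p ^ (j + 1) ≤ (c j : ℝ) / p ^ (j + 1) := by gcongr
    simp only [zero_add, pow_one]
    linarith
  have hval2 : val (M + 1) c ≤ 1 := by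
    refine (val_le (by linarith) hc).trans (le_of_eq ?_)
    rw [add_sub_cancel_right, div_self (by positivity)]
  obtain ⟨x, hx, hx'⟩ := intermediate_value_Icc' hp2
    ((continuousOn_val hp hc).mono Set.Icc_subset_Ici_self) ⟨hval2, hval⟩
  exact ⟨x, hp1.trans_le hx.1, hx.2, hx'⟩

/-- Every sequence satisfying the lexicographic conditions of a quasi-greedy expansion of `1` is
one. -/
lemma exists_base {M : ℕ} {c : ℕ → ℕ} (hM : 1 ≤ M) (hc : ∀ i, c i ≤ M) (h0 : c 0 = M)
    (hinf : ∀ k, ∃ j, sh k c j ≠ 0) (hle : ∀ k, lexLe (sh k c) c) :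
    ∃ p : ℝ, (M : ℝ) < p ∧ p ≤ M + 1 ∧ QG p M c := by
  obtain ⟨j, hj⟩ := hinf 1
  obtain ⟨p, hp1, hp2, hp3⟩ := exists_base_val_eq_one hM hc h0 (j := 1 + j) (by omega) hj
  have hp := one_lt_base hM hp1
  refine ⟨p, hp1, hp2, hc, hp3, fun k => ⟨?_, ?_⟩⟩
  · obtain ⟨i, hi⟩ := hinf k
    exact val_pos hp (sh_le hc) hi
  · refine val_le_one_of_set hp hc hp3 {d | ∃ k, d = sh k c}
      (by rintro d ⟨k, rfl⟩; exact sh_le hc) ?_ _ ⟨k, rfl⟩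
    rintro d ⟨k, rfl⟩
    rcases hle k with ⟨n, hn⟩ | h
    · exact Or.inr ⟨n, hn, _, sh_sh _ _ _⟩
    · exact Or.inl h

lemma Strict.exists_base {M : ℕ} {c : ℕ → ℕ} (hM : 1 ≤ M) (h : Strict M c) :
    ∃ p : ℝ, (M : ℝ) < p ∧ p ≤ M + 1 ∧ QG p M c ∧ p ∈ UnivBases := by
  obtain ⟨hc, h0, hs⟩ := h
  obtain ⟨p, hp1, hp2, hp3⟩ := _root_.exists_base hM hc h0 (fun k => by
      by_contra hz
      push Not at hz
      have h1 : rf M (sh (k + 1) c) = fun _ => M := by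
        funext i
        have := hz (1 + i)
        simp only [sh, ← add_assoc] at this
        simp only [rf, sh, this]; omega
      obtain ⟨n, -, h2⟩ := (hs (k + 1) (by omega)).2
      rw [h1] at h2
      exact absurd h2 (not_lt.2 (hc n))) (fun k => by
      rcases Nat.eq_zero_or_pos k with rfl | hk
      · exact Or.inr (sh_zero c)
      · exact Or.inl (hs k hk).1)
  refine ⟨p, hp1, hp2, hp3, (mem_UnivBases_iff hM hp1 hp2 hp3).2 ?_⟩
  exact mem_USeq_of_lex hM hp1 hp2 hp3 hc (fun n _ => (hs _ (by omega)).1)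
    (fun n _ => (hs _ (by omega)).2)

/-- A strict sequence between the quasi-greedy expansions of `1` in bases `q` and `r` yields a
univoque base in `(q, r]`. -/
lemma exists_univBase {q r : ℝ} {M : ℕ} {a b c : ℕ → ℕ} (hM : 1 ≤ M) (hr : (M : ℝ) < r)
    (ha : QG q M a) (hb : QG r M b) (hc : Strict M c) (hac : lexLt a c)
    (hcb : lexLe c b) : (Set.Ioc q r ∩ UnivBases).Nonempty := by
  obtain ⟨p, hp1, hp2, hp3, hp4⟩ := hc.exists_base hM
  refine ⟨p, ⟨?_, ?_⟩, hp4⟩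
  · by_contra hpq
    rcases (not_lt.1 hpq).lt_or_eq with h | h
    · exact lexLt_irrefl _ (lexLt_trans hac (hp3.mono hM hp1 h ha))
    · subst h
      rw [ha.unique (one_lt_base hM hp1) hp3] at hac
      exact lexLt_irrefl _ hac
  · by_contra hpr
    exact not_lt_of_lexLe hcb (hb.mono hM hr (not_le.1 hpr) hp3)

/-! ### Good truncation lengths -/

/-- If `L k` is the place where some matching started at `k` breaks off, and a matching started
inside another one does not outlast it, then there are arbitrarily large `m` not reached by any
matching started earlier. -/
lemma exists_good_of_nested (L : ℕ → ℕ) (hL : ∀ k, k ≤ L k)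
    (hnest : ∀ k k', 1 ≤ k → k < k' → k' ≤ L k → L k' ≤ L k) (N : ℕ) :
    ∃ m, N < m ∧ ∀ k, 1 ≤ k → k < m → L k < m := by
  classical
  have hex : ∃ k, 1 ≤ k ∧ N ≤ L k := ⟨N + 1, by omega, by have := hL (N + 1); omega⟩
  obtain ⟨hk1, hk2⟩ := Nat.find_spec hex
  -- the smallest `k` whose matching reaches `N`
  set k := Nat.find hex with hk
  refine ⟨L k + 1, by omega, fun k' h1 h2 => ?_⟩
  rcases lt_trichotomy k' k with h | h | h
  · have := Nat.find_min hex h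
    push Not at this
    have := this h1
    omega
  · rw [h]; omega
  · have := hnest k k' hk1 h (by omega)
    omega

/-- `m` is good for `a` if every proper nonempty suffix of `a_0 … a_{m-1}` is lexicographically
larger than the prefix of the same length of the reflection of `a`. -/
def Good (M : ℕ) (a : ℕ → ℕ) (m : ℕ) : Prop :=
  ∀ k, 1 ≤ k → k < m → ∃ n, k + n < m ∧ ltAt n (rf M a) (sh k a)

/-- The last digit of a good truncation is positive, so subtracting `1` from it makes sense. -/
lemma Good.last_pos {M m : ℕ} {a : ℕ → ℕ} (hM : 1 ≤ M) (ha0 : a 0 = M) (h : Good M a m) :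
    0 < a (m - 1) := by
  by_cases h1 : 1 ≤ m - 1
  · obtain ⟨n, hn, -, hn2⟩ := h (m - 1) h1 (by omega)
    obtain rfl : n = 0 := by omega
    simp only [sh, add_zero] at hn2
    omega
  · rw [show m - 1 = 0 by omega]; omega

lemma exists_good {M : ℕ} {a : ℕ → ℕ} (ha : ∀ i, a i ≤ M)
    (hup : ∀ k, lexLe (sh k a) a) (hdown : ∀ k, 1 ≤ k → lexLt (rf M a) (sh k a)) (N : ℕ) :
    ∃ m, N < m ∧ Good M a m := by
  have h1 : ∀ k, ∃ n, 1 ≤ k → ltAt n (rf M a) (sh k a) := by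
    intro k
    by_cases hk : 1 ≤ k
    · obtain ⟨n, hn⟩ := hdown k hk
      exact ⟨n, fun _ => hn⟩
    · exact ⟨0, fun h => absurd h hk⟩
  choose f hf using h1
  obtain ⟨m, hm, hm'⟩ := exists_good_of_nested (fun k => k + f k) (fun k => by omega) (by
    intro k k' hk hkk' hk'
    by_contra hlt
    simp only [not_le] at hlt hk'
    obtain ⟨t, ht⟩ : ∃ t, f k = (k' - k) + t := ⟨f k - (k' - k), by omega⟩
    obtain ⟨u1, u2⟩ := hf k hk
    obtain ⟨v1, -⟩ := hf k' (by omega)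
    refine not_lt_of_lexLe (hup (k' - k)) ⟨t, fun i hi => ?_, ?_⟩
    · have e1 := u1 (k' - k + i) (by omega)
      have e2 := v1 i (by omega)
      have e3 := ha i
      have e4 := ha (k' - k + i)
      simp only [rf, sh] at e1 e2 ⊢
      rw [show k + (k' - k + i) = k' + i by omega] at e1
      omega
    · have e2 := v1 t (by omega)
      have e3 := ha t
      have e4 := ha (k' - k + t)
      rw [ht] at u2
      simp only [rf, sh] at u2 e2 ⊢
      rw [show k + (k' - k + t) = k' + t by omega] at u2
      omega) N
  exact ⟨m, hm, fun k hk hkm => ⟨f k, hm' k hk hkm, hf k hk⟩⟩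

/-- The counterpart of `exists_good` for a non-periodic `a`: every proper nonempty suffix of
`a_0 … a_{m-1}` is smaller than the prefix of `a` of the same length. -/
lemma exists_good' {a : ℕ → ℕ} (hup : ∀ k, 1 ≤ k → lexLt (sh k a) a) (N : ℕ) :
    ∃ m, N < m ∧ ∀ k, 1 ≤ k → k < m → ∃ n, k + n < m ∧ ltAt n (sh k a) a := by
  have h1 : ∀ k, ∃ n, 1 ≤ k → ltAt n (sh k a) a := by
    intro k
    by_cases hk : 1 ≤ k
    · obtain ⟨n, hn⟩ := hup k hk
      exact ⟨n, fun _ => hn⟩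
    · exact ⟨0, fun h => absurd h hk⟩
  choose f hf using h1
  obtain ⟨m, hm, hm'⟩ := exists_good_of_nested (fun k => k + f k) (fun k => by omega) (by
    intro k k' hk hkk' hk'
    by_contra hlt
    simp only [not_le] at hlt hk'
    obtain ⟨t, ht⟩ : ∃ t, f k = (k' - k) + t := ⟨f k - (k' - k), by omega⟩
    obtain ⟨u1, u2⟩ := hf k hk
    obtain ⟨v1, -⟩ := hf k' (by omega)
    refine not_lt_of_lexLe (Or.inl (hup (k' - k) (by omega))) ⟨t, fun i hi => ?_, ?_⟩
    · have e1 := u1 (k' - k + i) (by omega)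
      have e2 := v1 i (by omega)
      simp only [sh] at e1 e2 ⊢
      rw [show k + (k' - k + i) = k' + i by omega] at e1
      omega
    · have e2 := v1 t (by omega)
      rw [ht] at u2
      simp only [sh] at u2 e2 ⊢
      rw [show k + (k' - k + t) = k' + t by omega] at u2
      omega) N
  exact ⟨m, hm, fun k hk hkm => ⟨f k, hm' k hk hkm, hf k hk⟩⟩

/-! ### Univoque bases just above a univoque base -/

/-- Given a strict `a`, the sequence `a_0 … a_{m-2} (a_{m-1} + 1)` followed by the reflection of `a`
is strict for suitable large `m`. -/
lemma exists_strict_above {M : ℕ} {a b : ℕ → ℕ} (hM : 1 ≤ M) (ha : Strict M a)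
    (hab : lexLt a b) : ∃ c, Strict M c ∧ lexLt a c ∧ lexLt c b := by
  obtain ⟨had, ha0, hs⟩ := ha
  obtain ⟨N, hN1, hN2⟩ := hab
  obtain ⟨m, hm, hgood⟩ := exists_good' (fun k hk => (hs k hk).1) (N + 1)
  let c : ℕ → ℕ := fun n => if n < m - 1 then a n else if n = m - 1 then a n + 1 else M - a (n - m)
  have c1 : ∀ n, n < m - 1 → c n = a n := fun n hn => by simp [c, hn]
  have c2 : c (m - 1) = a (m - 1) + 1 := by simp [c]
  have c3 : sh m c = rf M a := by
    funext i
    have e1 : ¬ (m + i < m - 1) := by omega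
    have e2 : ¬ (m + i = m - 1) := by omega
    simp only [sh, c, e1, e2, if_false, rf, add_tsub_cancel_left]
  have c3' : ∀ j, sh (m + j) c = rf M (sh j a) := by
    intro j; rw [← sh_sh, c3, sh_rf]
  have hlast : a (m - 1) < M := by
    obtain ⟨n, hn, -, hn2⟩ := hgood (m - 1) (by omega) (by omega)
    obtain rfl : n = 0 := by omega
    rw [ha0] at hn2
    exact hn2
  have hcd : ∀ i, c i ≤ M := by
    intro i
    have := had i
    simp only [c]
    split_ifs with h1 h2
    · exact this
    · subst h2; omega
    · omega
  have hac : lexLt a c := ⟨m - 1, fun i hi => (c1 i hi).symm, by omega⟩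
  have hac' : ∀ k, k < m → lexLt (sh k a) (sh k c) := fun k hk =>
    ⟨m - 1 - k, fun i hi => (c1 _ (by omega)).symm, by
      simp only [sh]; rw [show k + (m - 1 - k) = m - 1 by omega]; omega⟩
  have hdown : ∀ k, 1 ≤ k → lexLt (rf M a) (sh k a) := by
    intro k hk
    have := (hs k hk).2.rf (M := M) had
    rwa [rf_rf (sh_le had)] at this
  have hrac : lexLt (rf M a) a := ⟨0, fun i hi => by omega, by simp only [rf, ha0]; omega⟩
  have hle : ∀ j, lexLe (sh j a) a := fun j => by
    rcases Nat.eq_zero_or_pos j with rfl | h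
    · exact Or.inr (sh_zero a)
    · exact Or.inl (hs j h).1
  refine ⟨c, ⟨hcd, by rw [c1 0 (by omega), ha0], fun k hk => ?_⟩, hac,
    N, fun i hi => (c1 i (by omega)).trans (hN1 i hi), by rw [c1 N (by omega)]; exact hN2⟩
  by_cases hkm : k < m
  · constructor
    · obtain ⟨n, hn, hn1, hn2⟩ := hgood k hk hkm
      have hag : ∀ i, i < n → sh k c i = c i := fun i hi => by
        have := hn1 i hi
        simp only [sh] at this ⊢
        rw [c1 _ (by omega), c1 _ (by omega), this]
      simp only [sh] at hn2
      by_cases hend : k + n = m - 1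
      · have e1 : sh k c n = a (k + n) + 1 := by simp only [sh]; rw [hend, c2]
        have e2 : c n = a n := c1 n (by omega)
        by_cases heq : sh k c n = c n
        · refine lexLt_of_common_start (n + 1) (fun i hi => ?_) ?_
          · rcases Nat.lt_succ_iff_lt_or_eq.1 hi with h | rfl
            · exact hag i h
            · exact heq
          · rw [sh_sh, show k + (n + 1) = m by omega, c3]
            exact lexLt_trans (hdown _ (by omega)) (hac' (n + 1) (by omega))
        · exact ⟨n, hag, by omega⟩
      · refine ⟨n, hag, ?_⟩
        simp only [sh]
        rw [c1 _ (by omega), c1 _ (by omega)]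
        exact hn2
    · have := (lexLt_trans (hdown k hk) (hac' k hkm)).rf (M := M) (sh_le hcd)
      rw [rf_rf had] at this
      exact lexLt_trans this hac
  · obtain ⟨j, rfl⟩ : ∃ j, k = m + j := ⟨k - m, by omega⟩
    rw [c3', rf_rf (sh_le had)]
    constructor
    · rcases Nat.eq_zero_or_pos j with rfl | h
      · rw [sh_zero]; exact lexLt_trans hrac hac
      · exact lexLt_trans (hs j h).2 hac
    · exact lexLt_of_le_of_lt (hle j) hac

/-! ### Concatenations of truncations -/

/-- One step of the position `(i, k)`, index `k` in block `i`, when block `i` has length `m i`. -/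
def blockStep (m : ℕ → ℕ) (s : ℕ × ℕ) : ℕ × ℕ :=
  if s.2 + 1 < m s.1 then (s.1, s.2 + 1) else (s.1 + 1, 0)

/-- The concatenation of the blocks `a_0 … a_{m-2} (a_{m-1} - 1)` with `m = m 0, m 1, …`, read from
the position `s` on. -/
def blockSeq (a m : ℕ → ℕ) (s : ℕ × ℕ) (n : ℕ) : ℕ :=
  let t := (blockStep m)^[n] s
  if t.2 + 1 < m t.1 then a t.2 else a t.2 - 1

lemma sh_blockSeq (a m : ℕ → ℕ) (s : ℕ × ℕ) (n : ℕ) :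
    sh n (blockSeq a m s) = blockSeq a m ((blockStep m)^[n] s) := by
  funext i
  simp only [sh, blockSeq]
  rw [add_comm n i, Function.iterate_add_apply]

lemma blockStep_iterate {m : ℕ → ℕ} {i k n : ℕ} (h : k + n < m i) :
    (blockStep m)^[n] (i, k) = (i, k + n) := by
  induction n with
  | zero => rfl
  | succ n ih =>
    rw [Function.iterate_succ_apply', ih (by omega)]
    simp only [blockStep]
    rw [if_pos (by omega)]
    rfl

lemma blockStep_iterate_end {m : ℕ → ℕ} {i k n : ℕ} (h : k + n + 1 = m i) :
    (blockStep m)^[n + 1] (i, k) = (i + 1, 0) := by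
  rw [Function.iterate_succ_apply', blockStep_iterate (by omega)]
  simp only [blockStep]
  rw [if_neg (by omega)]

lemma blockSeq_lt {a m : ℕ → ℕ} {i k n : ℕ} (h : k + n + 1 < m i) :
    blockSeq a m (i, k) n = a (k + n) := by
  simp only [blockSeq]
  rw [blockStep_iterate (by omega), if_pos h]

lemma blockSeq_eq {a m : ℕ → ℕ} {i k n : ℕ} (h : k + n + 1 = m i) :
    blockSeq a m (i, k) n = a (k + n) - 1 := by
  simp only [blockSeq]
  rw [blockStep_iterate (by omega), if_neg (by simp only; omega)]

lemma blockSeq_le {M : ℕ} {a m : ℕ → ℕ} (ha : ∀ i, a i ≤ M) (s : ℕ × ℕ) :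
    ∀ n, blockSeq a m s n ≤ M := by
  intro n
  simp only [blockSeq]
  have := ha ((blockStep m)^[n] s).2
  split_ifs <;> omega

lemma blockStep_valid {m : ℕ → ℕ} (hm : ∀ i, 1 ≤ m i) {s : ℕ × ℕ} (hs : s.2 < m s.1) (n : ℕ) :
    ((blockStep m)^[n] s).2 < m ((blockStep m)^[n] s).1 := by
  induction n with
  | zero => exact hs
  | succ n ih =>
    rw [Function.iterate_succ_apply']
    simp only [blockStep]
    split_ifs with h
    · exact h
    · exact hm _

/-- After the first step, the position is never the beginning of block `0`. -/
lemma blockStep_ne {m : ℕ → ℕ} (s : ℕ × ℕ) (n : ℕ) :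
    (blockStep m)^[n + 1] s ≠ (0, 0) := by
  rw [Function.iterate_succ_apply']
  simp only [blockStep]
  split_ifs <;> simp

/-- A tail of a concatenation is smaller than `a`, and this is decided within the current block: its
last digit has been lowered. -/
lemma blockSeq_upper {M : ℕ} {a m : ℕ → ℕ} (hup : ∀ k, lexLe (sh k a) a)
    (ha0 : a 0 = M) (hM : 1 ≤ M) {i k : ℕ} (hk : k < m i) (hgood : Good M a (m i)) :
    ∃ n, k + n < m i ∧ ltAt n (blockSeq a m (i, k)) a := by
  have hpos := hgood.last_pos hM ha0
  have hlast : blockSeq a m (i, k) (m i - 1 - k) = a (m i - 1) - 1 := by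
    rw [blockSeq_eq (by omega)]; congr 2; omega
  have hbefore : ∀ n, n < m i - 1 - k → blockSeq a m (i, k) n = a (k + n) :=
    fun n hn => blockSeq_lt (by omega)
  have hcase : (∃ n, n < m i - 1 - k ∧ ltAt n (sh k a) a) ∨
      ((∀ n, n < m i - 1 - k → sh k a n = a n) ∧ a (m i - 1) ≤ a (m i - 1 - k)) := by
    rcases hup k with ⟨n, hn⟩ | h
    · rcases lt_trichotomy n (m i - 1 - k) with h1 | h1 | h1
      · exact Or.inl ⟨n, h1, hn⟩
      · refine Or.inr ⟨fun j hj => hn.1 j (by omega), ?_⟩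
        have := hn.2
        rw [h1] at this
        simp only [sh] at this
        rw [show k + (m i - 1 - k) = m i - 1 by omega] at this
        exact this.le
      · refine Or.inr ⟨fun j hj => hn.1 j (by omega), ?_⟩
        have := hn.1 _ h1
        simp only [sh] at this
        rw [show k + (m i - 1 - k) = m i - 1 by omega] at this
        exact this.le
    · refine Or.inr ⟨fun j _ => congrFun h j, ?_⟩
      have := congrFun h (m i - 1 - k)
      simp only [sh] at this
      rw [show k + (m i - 1 - k) = m i - 1 by omega] at this
      exact this.le
  rcases hcase with ⟨n, h1, h2⟩ | ⟨h1, h2⟩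
  · refine ⟨n, by omega, fun j hj => ?_, ?_⟩
    · rw [hbefore j (by omega)]; exact h2.1 j hj
    · rw [hbefore n h1]; exact h2.2
  · refine ⟨m i - 1 - k, by omega, fun j hj => ?_, ?_⟩
    · rw [hbefore j hj]; exact h1 j hj
    · rw [hlast]; omega

/-- A tail of a concatenation is larger than the reflection of `a`. If the comparison ties up to the
lowered last digit of the current block, it is decided within the next block. -/
lemma blockSeq_lower {M : ℕ} {a m : ℕ → ℕ} (ha0 : a 0 = M) (hM : 1 ≤ M) {i k B : ℕ} (hk : k < m i)
    (hgood : Good M a (m i)) (hB : B < m (i + 1))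
    (hD : ∀ j, 1 ≤ j → j ≤ m i → ∃ n, n < B ∧ ltAt n (rf M (sh j a)) a) :
    ∃ n, n < m i - k + B ∧ ltAt n (rf M a) (blockSeq a m (i, k)) := by
  have hgood' : ∃ n, k + n < m i ∧ ltAt n (rf M a) (sh k a) := by
    rcases Nat.eq_zero_or_pos k with rfl | h
    · exact ⟨0, by omega, fun i hi => by omega, by simp only [rf, sh, zero_add, ha0]; omega⟩
    · exact hgood k h hk
  obtain ⟨n, hn, hn1, hn2⟩ := hgood'
  have hag : ∀ j, j < n → rf M a j = blockSeq a m (i, k) j := fun j hj => by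
    rw [hn1 j hj, blockSeq_lt (by omega)]; rfl
  by_cases hend : k + n + 1 = m i
  · have e1 : blockSeq a m (i, k) n = a (k + n) - 1 := blockSeq_eq hend
    simp only [sh] at hn2
    by_cases heq : rf M a n = blockSeq a m (i, k) n
    · obtain ⟨n', h1, h2, h3⟩ := hD (n + 1) (by omega) (by omega)
      have e2 : sh (n + 1) (blockSeq a m (i, k)) = blockSeq a m (i + 1, 0) := by
        rw [sh_blockSeq, blockStep_iterate_end hend]
      have e3 : ∀ j, j < B → blockSeq a m (i, k) (n + 1 + j) = a j := by
        intro j hj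
        have := congrFun e2 j
        rw [blockSeq_lt (by omega), zero_add] at this
        exact this
      refine ⟨n + 1 + n', by omega, fun j hj => ?_, ?_⟩
      · rcases lt_trichotomy j n with h | rfl | h
        · exact hag j h
        · exact heq
        · obtain ⟨l, rfl⟩ : ∃ l, j = n + 1 + l := ⟨j - (n + 1), by omega⟩
          rw [e3 l (by omega)]
          exact h2 l (by omega)
      · rw [e3 n' h1]; exact h3
    · exact ⟨n, by omega, hag, by omega⟩
  · refine ⟨n, by omega, hag, ?_⟩
    rw [blockSeq_lt (by omega)]
    exact hn2

/-! ### Univoque bases just below a base with periodic quasi-greedy expansion -/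

lemma rf_sh_lt {M : ℕ} {a : ℕ → ℕ} (ha : ∀ i, a i ≤ M) {k : ℕ}
    (h : lexLt (rf M a) (sh k a)) : lexLt (rf M (sh k a)) a := by
  have := h.rf (M := M) (sh_le ha)
  rwa [rf_rf ha] at this

lemma rf_lt_sh {M : ℕ} {a : ℕ → ℕ} (ha : ∀ i, a i ≤ M) {k : ℕ}
    (h : lexLt (rf M (sh k a)) a) : lexLt (rf M a) (sh k a) := by
  have := h.rf (M := M) ha
  rwa [rf_rf (sh_le ha)] at this

/-- For a periodic `a` the conditions `rf M (sh j a) < a` are decided within a bounded number of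
digits. -/
lemma exists_uniform_of_periodic {M P : ℕ} {a : ℕ → ℕ} (hP : 1 ≤ P) (hper : sh P a = a)
    (h : ∀ k, 1 ≤ k → lexLt (rf M (sh k a)) a) :
    ∃ N, ∀ j, ∃ n, n < N ∧ ltAt n (rf M (sh j a)) a := by
  have h1 : ∀ k, ∃ n, 1 ≤ k → ltAt n (rf M (sh k a)) a := by
    intro k
    by_cases hk : 1 ≤ k
    · obtain ⟨n, hn⟩ := h k hk
      exact ⟨n, fun _ => hn⟩
    · exact ⟨0, fun h => absurd h hk⟩
  choose f hf using h1
  have hmul : ∀ t, sh (P * t) a = a := by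
    intro t
    induction t with
    | zero => exact sh_zero a
    | succ t ih => rw [Nat.mul_succ, ← sh_sh, ih, hper]
  refine ⟨(Finset.range (2 * P)).sup f + 1, fun j => ⟨f (P + j % P), ?_, ?_⟩⟩
  · have hlt := Nat.mod_lt j hP
    exact Nat.lt_succ_of_le (Finset.le_sup (f := f) (Finset.mem_range.2 (by omega)))
  · have h2 := hf (P + j % P) (by omega)
    have h3 : sh (P + j % P) a = sh j a := by
      rw [← sh_sh, hper]
      conv_rhs => rw [← Nat.div_add_mod j P, ← sh_sh, hmul]
    rwa [h3] at h2

/-- If `a` is periodic, then a long truncation of `a` followed by infinitely many copies of a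
shorter one is strict and close to `a` from below. -/
lemma exists_strict_below {M P : ℕ} {a b : ℕ → ℕ} (hM : 1 ≤ M) (ha : ∀ i, a i ≤ M) (ha0 : a 0 = M)
    (hup : ∀ k, lexLe (sh k a) a) (hdown : ∀ k, 1 ≤ k → lexLt (rf M (sh k a)) a)
    (hP : 1 ≤ P) (hper : sh P a = a) (hba : lexLt b a) :
    ∃ c, Strict M c ∧ lexLt b c ∧ lexLt c a := by
  obtain ⟨N, hN⟩ := exists_uniform_of_periodic hP hper hdown
  obtain ⟨n₀, hn₀, hn₀'⟩ := hba
  have hdown' := fun k hk => rf_lt_sh ha (hdown k hk)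
  obtain ⟨l, hl, hlg⟩ := exists_good ha hup hdown' N
  obtain ⟨m₀, hm₀, hm₀g⟩ := exists_good ha hup hdown' (2 * N + l + n₀ + 5)
  let m : ℕ → ℕ := fun i => if i = 0 then m₀ else l
  have hm0 : m 0 = m₀ := rfl
  have hms : ∀ i, i ≠ 0 → m i = l := fun i hi => by simp [m, hi]
  have hmg : ∀ i, Good M a (m i) := fun i => by
    simp only [m]; split_ifs <;> assumption
  have hm1 : ∀ i, 1 ≤ m i := fun i => by
    simp only [m]; split_ifs <;> omega
  set c := blockSeq a m (0, 0) with hcdef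
  have hca : ∀ n, n < m₀ - 1 → c n = a n := fun n hn => by
    rw [hcdef, blockSeq_lt (by omega), zero_add]
  have hcd : ∀ i, c i ≤ M := blockSeq_le ha _
  have hlow : ∀ n d, n < m₀ - 1 → ltAt n (rf M a) d → (∀ i, d i ≤ M) → lexLt (rf M d) c := by
    intro n d hn hd hdM
    have : ltAt n (rf M c) d := ⟨fun i hi => by
      rw [← hd.1 i hi]; simp only [rf]; rw [hca i (by omega)], by
      have := hd.2
      simp only [rf] at this ⊢
      rwa [hca n hn]⟩
    have := this.rf (M := M) hdM
    rw [rf_rf hcd] at this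
    exact this.lt
  refine ⟨c, ⟨hcd, by rw [hca 0 (by omega), ha0], fun k hk => ?_⟩,
    ⟨n₀, fun i hi => (hn₀ i hi).trans (hca i (by omega)).symm, by rw [hca n₀ (by omega)]; exact hn₀'⟩,
    ?_⟩
  · obtain ⟨k, rfl⟩ : ∃ k', k = k' + 1 := ⟨k - 1, by omega⟩
    have hv := blockStep_valid hm1 (s := (0, 0)) (hm1 0) (k + 1)
    have hne := blockStep_ne (m := m) (0, 0) k
    rw [hcdef, sh_blockSeq, ← hcdef]
    generalize (blockStep m)^[k + 1] (0, 0) = s at hv hne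
    obtain ⟨i, j⟩ := s
    simp only at hv
    have hij : i = 0 → 1 ≤ j := by
      rintro rfl
      by_contra h
      exact hne (by rw [show j = 0 by omega])
    constructor
    · obtain ⟨n, hn, hn'⟩ := blockSeq_upper hup ha0 hM hv (hmg i)
      have hnm : n < m₀ - 1 := by
        by_cases hi : i = 0
        · have := hij hi
          subst hi
          omega
        · rw [hms i hi] at hn
          omega
      exact ⟨n, fun t ht => (hn'.1 t ht).trans (hca t (by omega)).symm, by
        rw [hca n hnm]; exact hn'.2⟩
    · obtain ⟨n, hn, hn'⟩ := blockSeq_lower (B := N) ha0 hM hv (hmg i)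
        (by rw [hms _ (by omega)]; exact hl) (fun j _ _ => hN j)
      by_cases hi : i = 0
      · subst hi
        by_cases hj : j + N < m₀
        · -- far from the end of the first block, the comparison is decided inside the block
          obtain ⟨n, hn, hn'⟩ := hN j
          have hn'' := hn'.rf (M := M) ha
          rw [rf_rf (sh_le ha)] at hn''
          refine hlow n _ (by omega) ⟨fun t ht => ?_, ?_⟩ (blockSeq_le ha _)
          · rw [blockSeq_lt (by omega)]; exact hn''.1 t ht
          · rw [blockSeq_lt (by omega)]; exact hn''.2
        · exact hlow n _ (by omega) hn' (blockSeq_le ha _)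
      · rw [hms i hi] at hn
        exact hlow n _ (by omega) hn' (blockSeq_le ha _)
  · obtain ⟨n, -, hn'⟩ := blockSeq_upper (i := 0) hup ha0 hM (hm1 0) (hmg 0)
    exact hn'.lt

/-! ### Uncountably many sequences below the expansion of a univoque base -/

lemma exists_good_sequence {M : ℕ} {a : ℕ → ℕ} (ha : ∀ i, a i ≤ M)
    (hup : ∀ k, lexLe (sh k a) a) (hdown : ∀ k, 1 ≤ k → lexLt (rf M (sh k a)) a) (N : ℕ) :
    ∃ g : ℕ → ℕ, StrictMono g ∧ N < g 0 ∧ (∀ i, Good M a (g i)) ∧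
      ∀ i i', i < i' → ∀ j, 1 ≤ j → j ≤ g i →
        ∃ n, n < g i' - 1 ∧ ltAt n (rf M (sh j a)) a := by
  have hdown' := fun k hk => rf_lt_sh ha (hdown k hk)
  have h1 : ∀ k, ∃ n, 1 ≤ k → ltAt n (rf M (sh k a)) a := by
    intro k
    by_cases hk : 1 ≤ k
    · obtain ⟨n, hn⟩ := hdown k hk
      exact ⟨n, fun _ => hn⟩
    · exact ⟨0, fun h => absurd h hk⟩
  choose f hf using h1
  have hstep : ∀ m, ∃ m', m + (Finset.range (m + 1)).sup f + 1 < m' ∧ Good M a m' :=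
    fun m => exists_good ha hup hdown' _
  choose G hG1 hG2 using hstep
  let g : ℕ → ℕ := fun n => Nat.rec (G N) (fun _ x => G x) n
  have hg : ∀ n, g (n + 1) = G (g n) := fun n => rfl
  have hmono : StrictMono g := strictMono_nat_of_lt_succ fun n => by
    have := hG1 (g n)
    rw [hg]; omega
  refine ⟨g, hmono, ?_, fun i => ?_, fun i i' hii' j hj1 hj2 => ?_⟩
  · have : g 0 = G N := rfl
    have := hG1 N
    omega
  · cases i with
    | zero => exact hG2 _
    | succ i => rw [hg]; exact hG2 _
  · obtain ⟨t, rfl⟩ : ∃ t, i' = t + 1 := ⟨i' - 1, by omega⟩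
    have h2 : g i ≤ g t := hmono.monotone (by omega)
    refine ⟨f j, ?_, hf j hj1⟩
    have h3 := hG1 (g t)
    have h4 : f j ≤ (Finset.range (g t + 1)).sup f :=
      Finset.le_sup (f := f) (Finset.mem_range.2 (by omega))
    rw [hg]
    omega

lemma blockSeq_injective {M : ℕ} {a m m' : ℕ → ℕ} (hM : 1 ≤ M) (ha0 : a 0 = M)
    (hm : ∀ i, 1 ≤ m i) (hm' : ∀ i, 1 ≤ m' i)
    (hg : ∀ i, Good M a (m i)) (hg' : ∀ i, Good M a (m' i))
    (h : blockSeq a m (0, 0) = blockSeq a m' (0, 0)) : m = m' := by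
  have aux : ∀ {m m' : ℕ → ℕ} {i : ℕ}, 1 ≤ m i → Good M a (m i) →
      blockSeq a m (i, 0) = blockSeq a m' (i, 0) → ¬ m i < m' i := by
    intro m m' i h1 h2 h3 h4
    have h5 := congrFun h3 (m i - 1)
    rw [blockSeq_eq (by omega), blockSeq_lt (by omega), zero_add] at h5
    have := h2.last_pos hM ha0
    omega
  have key : ∀ i, blockSeq a m (i, 0) = blockSeq a m' (i, 0) → m i = m' i := fun i hi => by
    have h1 := aux (hm i) (hg i) hi
    have h2 := aux (hm' i) (hg' i) hi.symm
    omega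
  have hall : ∀ i, blockSeq a m (i, 0) = blockSeq a m' (i, 0) := by
    intro i
    induction i with
    | zero => exact h
    | succ i ih =>
      have h1 := key i ih
      have h2 := congrArg (sh (m i - 1 + 1)) ih
      have := hm i
      rwa [sh_blockSeq, sh_blockSeq, blockStep_iterate_end (by omega),
        blockStep_iterate_end (by omega)] at h2
  funext i
  exact key i (hall i)

/-- Concatenations of longer and longer good truncations of `a`; they all start with a prescribed
number of digits of `a`. -/
lemma exists_family {M : ℕ} {a : ℕ → ℕ} (hM : 1 ≤ M) (ha : ∀ i, a i ≤ M) (ha0 : a 0 = M)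
    (hup : ∀ k, lexLe (sh k a) a) (hdown : ∀ k, 1 ≤ k → lexLt (rf M (sh k a)) a) (N : ℕ) :
    ∃ F : Set ℕ → ℕ → ℕ, Function.Injective F ∧ ∀ x, (∀ i, F x i ≤ M) ∧ (∀ i, i < N → F x i = a i) ∧
      ∀ k, lexLt (sh k (F x)) a ∧ lexLt (rf M (sh k (F x))) a := by
  classical
  obtain ⟨g, hmono, hg0, hgood, hD⟩ := exists_good_sequence ha hup hdown N
  let m : Set ℕ → ℕ → ℕ := fun x i => g (2 * i + if i ∈ x then 1 else 0)
  have hm1 : ∀ x i, N < m x i := fun x i => hg0.trans_le (hmono.monotone (Nat.zero_le _))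
  have hmg : ∀ x i, Good M a (m x i) := fun x i => hgood _
  refine ⟨fun x => blockSeq a (m x) (0, 0), fun x y hxy => ?_, fun x => ⟨?_, ?_, fun k => ?_⟩⟩
  · have h1 := blockSeq_injective hM ha0 (fun i => by have := hm1 x i; omega)
      (fun i => by have := hm1 y i; omega) (hmg x) (hmg y) hxy
    ext i
    have h2 := hmono.injective (congrFun h1 i)
    by_cases hx : i ∈ x <;> by_cases hy : i ∈ y <;> simp [hx, hy] at h2 ⊢
  · exact blockSeq_le ha _
  · intro i hi
    have := hm1 x 0
    simp only
    rw [blockSeq_lt (by omega), zero_add]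
  · have hv := blockStep_valid (m := m x) (fun i => by have := hm1 x i; omega) (s := (0, 0))
      (by have := hm1 x 0; simp only; omega) k
    simp only
    rw [sh_blockSeq]
    generalize (blockStep (m x))^[k] (0, 0) = s at hv
    obtain ⟨i, j⟩ := s
    simp only at hv
    constructor
    · obtain ⟨n, -, hn⟩ := blockSeq_upper hup ha0 hM hv (hmg x i)
      exact hn.lt
    · obtain ⟨n, -, hn⟩ := blockSeq_lower (B := m x (i + 1) - 1) ha0 hM hv (hmg x i)
        (by have := hm1 x (i + 1); omega)
        (hD _ _ (by split_ifs <;> omega))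
      have := hn.rf (M := M) (blockSeq_le ha _)
      rw [rf_rf ha] at this
      exact this.lt

/-- The sequences of `exists_family` are univoque in base `p`. With the digit `0` in front they are
not univoque in base `q`, as the part after this `0` exceeds the quasi-greedy expansion of `1`. -/
lemma not_countable_of_univBase {q p r : ℝ} {M : ℕ} (hM : 1 ≤ M) (h1 : (M : ℝ) < q) (hqp : q < p)
    (hpr : p ≤ r) (h2 : r ≤ M + 1) (hp : p ∈ UnivBases) : ¬ (USeq r \ USeq q).Countable := by
  have hMp := h1.trans hqp
  have hp2 := hpr.trans h2
  obtain ⟨a, ha⟩ := exists_QG hM hMp hp2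
  obtain ⟨b, hb⟩ := exists_QG hM h1 (hqp.le.trans hp2)
  have hp1 := one_lt_base hM hMp
  have hq1 := one_lt_base hM h1
  obtain ⟨n, hn, hn'⟩ := hb.mono hM h1 hqp ha
  obtain ⟨F, hF, hF'⟩ := exists_family hM ha.1 (ha.zero_eq hM hMp) (fun k => ha.sh_le hp1 k)
    (fun k hk => ha.lexLt_of_val hp1 (rf_le _ _) (UnivBases.rf_tail hM hMp hp2 ha hp hk)) (n + 1)
  -- prepend the digit `0`
  let E : Set ℕ → ℕ → ℕ := fun x i => if i = 0 then 0 else F x (i - 1)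
  have hE : ∀ x k, sh (k + 1) (E x) = sh k (F x) := by
    intro x k
    funext i
    have e1 : ¬ (k + 1 + i = 0) := by omega
    simp only [sh, E, e1, if_false]
    congr 1; omega
  have hE0 : ∀ x, E x 0 = 0 := fun x => rfl
  have hEinj : Function.Injective E := fun x y hxy => hF (by
    have := congrArg (sh (0 + 1)) hxy
    rwa [hE, hE, sh_zero, sh_zero] at this)
  have hEM : ∀ x i, E x i ≤ M := fun x i => by
    simp only [E]; split_ifs
    · omega
    · exact (hF' x).1 _
  have hmem : ∀ x, E x ∈ USeq r \ USeq q := by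
    intro x
    obtain ⟨hx1, hx2, hx3⟩ := hF' x
    refine ⟨USeq_mono hM hMp hpr h2 (mem_USeq_of_lex hM hMp hp2 ha (hEM x) ?_ ?_), fun hx => ?_⟩
    · intro k _; rw [hE]; exact (hx3 k).1
    · intro k _; rw [hE]; exact (hx3 k).2
    · have h3 := ((mem_USeq_iff hM h1 (hqp.le.trans hp2)).1 hx).2.1 0 (by rw [hE0]; omega)
      rw [hE, sh_zero] at h3
      have h4 := hb.one_le_val hq1 hx1 (Or.inl ⟨n, fun i hi => by
        rw [hx2 i (by omega)]; exact hn i hi, by rw [hx2 n (by omega)]; exact hn'⟩)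
      linarith
  intro hcount
  have := hcount.to_subtype
  have hinj : Function.Injective fun x => (⟨E x, hmem x⟩ : ↥(USeq r \ USeq q)) :=
    fun x y hxy => hEinj (Subtype.ext_iff.1 hxy)
  have := hinj.countable
  obtain ⟨f, hf⟩ := exists_surjective_nat (Set ℕ)
  exact Function.cantor_surjective f hf

/-! ### Ultimately periodic sequences -/

lemma countable_ultimatelyPeriodic : {c | UltimatelyPeriodic c}.Countable := by
  have h : {c | UltimatelyPeriodic c} =
      ⋃ n : ℕ, ⋃ p : ℕ, {c : ℕ → ℕ | 0 < p ∧ ∀ i, n ≤ i → c (i + p) = c i} := by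
    ext c; simp [UltimatelyPeriodic]
  rw [h]
  refine Set.countable_iUnion fun n => Set.countable_iUnion fun p => ?_
  refine Set.countable_of_injective_of_countable_image
    (f := fun (c : ℕ → ℕ) (i : Fin (n + p)) => c i) ?_ (Set.to_countable _)
  rintro c ⟨hp, hc⟩ d ⟨-, hd⟩ hcd
  funext i
  induction i using Nat.strong_induction_on with
  | _ i ih =>
    by_cases hi : i < n + p
    · exact congrFun hcd ⟨i, hi⟩
    · have h1 := hc (i - p) (by omega)
      have h2 := hd (i - p) (by omega)
      rw [show i - p + p = i by omega] at h1 h2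
      rw [h1, h2, ih _ (by omega)]

lemma ultimatelyPeriodic_of_sh_eq {p m : ℕ} {s d : ℕ → ℕ} (hp : 1 ≤ p) (hs : sh p s = s)
    (hd : sh m d = s) : UltimatelyPeriodic d := by
  refine ⟨m, p, hp, fun i hi => ?_⟩
  obtain ⟨t, rfl⟩ : ∃ t, i = m + t := ⟨i - m, by omega⟩
  have h1 := congrFun hd (p + t)
  have h2 := congrFun hd t
  have h3 := congrFun hs t
  simp only [sh] at h1 h2 h3
  rw [h2, ← h3, ← h1]
  congr 1; omega

lemma ultimatelyPeriodic_of_sh {m : ℕ} {d : ℕ → ℕ} (h : UltimatelyPeriodic (sh m d)) :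
    UltimatelyPeriodic d := by
  obtain ⟨n, p, hp, h⟩ := h
  refine ⟨m + n, p, hp, fun i hi => ?_⟩
  have := h (i - m) (by omega)
  simp only [sh] at this
  rwa [show m + (i - m + p) = i + p by omega, show m + (i - m) = i by omega] at this

lemma ultimatelyPeriodic_of_rf {M : ℕ} {d : ℕ → ℕ} (hd : ∀ i, d i ≤ M)
    (h : UltimatelyPeriodic (rf M d)) : UltimatelyPeriodic d := by
  obtain ⟨n, p, hp, h⟩ := h
  refine ⟨n, p, hp, fun i hi => ?_⟩
  have := h i hi
  have := hd i
  have := hd (i + p)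
  simp only [rf] at *
  omega

/-- Lexicographic suprema exist and every prefix of the supremum is attained. -/
lemma exists_lex_sup {M : ℕ} (T : Set (ℕ → ℕ)) (hne : T.Nonempty) (hT : ∀ t ∈ T, ∀ i, t i ≤ M) :
    ∃ s, (∀ t ∈ T, lexLe t s) ∧ ∀ n, ∃ t ∈ T, ∀ i, i < n → t i = s i := by
  -- `S n` consists of the members of `T` whose first `n` digits are lexicographically largest
  let S : ℕ → Set (ℕ → ℕ) :=
    fun n => Nat.rec T (fun n S => {t | t ∈ S ∧ ∀ u ∈ S, u n ≤ t n}) n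
  have hS : ∀ n, S (n + 1) = {t | t ∈ S n ∧ ∀ u ∈ S n, u n ≤ t n} := fun n => rfl
  have hST : ∀ n, S n ⊆ T := by
    intro n
    induction n with
    | zero => exact subset_rfl
    | succ n ih => exact fun t ht => ih ht.1
  have hSne : ∀ n, (S n).Nonempty := by
    intro n
    induction n with
    | zero => exact hne
    | succ n ih =>
      have hb : BddAbove ((fun t : ℕ → ℕ => t n) '' S n) :=
        ⟨M, by rintro _ ⟨t, ht, rfl⟩; exact hT t (hST n ht) n⟩
      obtain ⟨t, ht, hteq⟩ := Nat.sSup_mem (ih.image fun t : ℕ → ℕ => t n) hb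
      refine ⟨t, ht, fun u hu => ?_⟩
      simp only at hteq
      rw [hteq]
      exact le_csSup hb ⟨u, hu, rfl⟩
  choose τ hτ using hSne
  let s : ℕ → ℕ := fun n => τ (n + 1) n
  have hdig : ∀ n, ∀ t ∈ S (n + 1), t n = s n := fun n t ht =>
    le_antisymm ((hτ (n + 1)).2 t ht.1) (ht.2 (τ (n + 1)) (hτ (n + 1)).1)
  have hagree : ∀ n, ∀ t ∈ S n, ∀ i, i < n → t i = s i := by
    intro n
    induction n with
    | zero => intro t _ i hi; omega
    | succ n ih =>
      intro t ht i hi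
      rcases Nat.lt_succ_iff_lt_or_eq.1 hi with h | rfl
      · exact ih t ht.1 i h
      · exact hdig _ t ht
  have hmem : ∀ n, ∀ t ∈ T, (∀ i, i < n → t i = s i) → t ∈ S n := by
    intro n
    induction n with
    | zero => intro t ht _; exact ht
    | succ n ih =>
      intro t ht h
      refine ⟨ih t ht fun i hi => h i (by omega), fun u hu => ?_⟩
      rw [h n (by omega)]
      exact (hτ (n + 1)).2 u hu
  refine ⟨s, fun t ht => ?_, fun n => ⟨τ n, hST n (hτ n), hagree n _ (hτ n)⟩⟩
  by_cases hts : t = s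
  · exact Or.inr hts
  · obtain ⟨n, h1, h2⟩ := exists_first_diff hts
    exact Or.inl ⟨n, h1, lt_of_le_of_ne ((hτ (n + 1)).2 t (hmem n t ht h1)) h2⟩

/-- If no strict sequence lies in `(a, b]`, then every sequence `d ≥ a` all of whose tails and
reflected tails are below `b` is ultimately periodic. Let `s` be the lexicographic supremum of these
tails. If a reflected tail of `s` equals `s`, then a prefix of `s` forces a tail of `d` to be
periodic. Otherwise `s` is strict or periodic; then there is a strict sequence in `(a, b]`, unless
`d = a = s` is periodic. -/
lemma ultimatelyPeriodic_of_no_strict {M : ℕ} {a b d : ℕ → ℕ} (hM : 1 ≤ M)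
    (ha0 : a 0 = M) (hab : lexLt a b) (hd : ∀ i, d i ≤ M) (had : lexLe a d)
    (hdb : ∀ k, lexLt (sh k d) b) (hdb' : ∀ k, lexLt (rf M (sh k d)) b)
    (hno : ∀ c, Strict M c → lexLt a c → ¬ lexLe c b) : UltimatelyPeriodic d := by
  let T : Set (ℕ → ℕ) := {t | ∃ m, t = sh m d ∨ t = rf M (sh m d)}
  have hTM : ∀ t ∈ T, ∀ i, t i ≤ M := by
    rintro t ⟨m, rfl | rfl⟩
    · exact sh_le hd
    · exact rf_le _ _
  have hTsh : ∀ k, ∀ t ∈ T, sh k t ∈ T := by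
    rintro k t ⟨m, rfl | rfl⟩
    · exact ⟨m + k, Or.inl (sh_sh _ _ _)⟩
    · exact ⟨m + k, Or.inr (by rw [sh_rf, sh_sh])⟩
  have hTrf : ∀ t ∈ T, rf M t ∈ T := by
    rintro t ⟨m, rfl | rfl⟩
    · exact ⟨m, Or.inr rfl⟩
    · exact ⟨m, Or.inl (rf_rf (sh_le hd))⟩
  have hTb : ∀ t ∈ T, lexLt t b := by
    rintro t ⟨m, rfl | rfl⟩
    · exact hdb m
    · exact hdb' m
  have hdT : d ∈ T := ⟨0, Or.inl (sh_zero d).symm⟩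
  obtain ⟨s, hs, hspre⟩ := exists_lex_sup T ⟨d, hdT⟩ hTM
  have hsM : ∀ i, s i ≤ M := fun i => by
    obtain ⟨t, ht, h⟩ := hspre (i + 1)
    rw [← h i (by omega)]; exact hTM t ht i
  have hup : ∀ k, lexLe (sh k s) s := by
    intro k
    refine lexLe_of_not_lt ?_
    rintro ⟨n, h1, h2⟩
    obtain ⟨t, ht, h⟩ := hspre (k + n + 1)
    refine not_lt_of_lexLe (hs _ (hTsh k t ht)) ⟨n, fun i hi => ?_, ?_⟩
    · rw [h1 i hi]; simp only [sh]; rw [h _ (by omega)]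
    · simp only [sh] at h2 ⊢; rwa [h _ (by omega)]
  have hdown : ∀ k, lexLe (rf M (sh k s)) s := by
    intro k
    refine lexLe_of_not_lt ?_
    rintro ⟨n, h1, h2⟩
    obtain ⟨t, ht, h⟩ := hspre (k + n + 1)
    refine not_lt_of_lexLe (hs _ (hTrf _ (hTsh k t ht))) ⟨n, fun i hi => ?_, ?_⟩
    · rw [h1 i hi]; simp only [sh, rf]; rw [h _ (by omega)]
    · simp only [sh, rf] at h2 ⊢; rwa [h _ (by omega)]
  have hsb : lexLe s b := by
    refine lexLe_of_not_lt ?_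
    rintro ⟨n, h1, h2⟩
    obtain ⟨t, ht, h⟩ := hspre (n + 1)
    refine lexLt_irrefl _ (lexLt_trans (hTb t ht) ⟨n, fun i hi => ?_, ?_⟩)
    · rw [h1 i hi, h i (by omega)]
    · rwa [h n (by omega)]
  have hds := hs d hdT
  have has : lexLe a s := by
    rcases had with h | rfl
    · exact Or.inl (lexLt_of_lt_of_le h hds)
    · exact hds
  have hs0 : s 0 = M := by
    rcases has with ⟨n, h1, h2⟩ | h
    · rcases Nat.eq_zero_or_pos n with rfl | hn
      · have := hsM 0; omega
      · rw [← h1 0 hn, ha0]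
    · rw [← h, ha0]
  by_cases hE : ∃ k, 1 ≤ k ∧ rf M (sh k s) = s
  · obtain ⟨k, hk, hks⟩ := hE
    have hks' : sh k s = rf M s := by
      have := congrArg (rf M) hks
      rwa [rf_rf (sh_le hsM)] at this
    have hper : sh (k + k) s = s := by rw [← sh_sh, hks', sh_rf, hks]
    obtain ⟨t, ht, htpre⟩ := hspre k
    -- a tail starting with the first `k` digits of `s` can only continue as `s` does
    have htk : sh k t = rf M s := by
      rcases lex_trichotomy (sh k t) (rf M s) with h | h | h
      · have h1 := h.rf (M := M) (rf_le _ _)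
        rw [rf_rf hsM] at h1
        exact absurd h1 (not_lt_of_lexLe (hs _ (hTrf _ (hTsh k t ht))))
      · exact h
      · rw [← hks'] at h
        exact absurd (lexLt_of_common_start k (fun i hi => (htpre i hi).symm) h)
          (not_lt_of_lexLe (hs t ht))
    obtain ⟨m, rfl | rfl⟩ := ht
    · rw [sh_sh] at htk
      refine ultimatelyPeriodic_of_sh_eq (p := k + k) (by omega) ?_ htk
      rw [sh_rf, hper]
    · rw [sh_rf, sh_sh] at htk
      have h1 := congrArg (rf M) htk
      rw [rf_rf (sh_le hd), rf_rf hsM] at h1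
      exact ultimatelyPeriodic_of_sh_eq (by omega) hper h1
  · have hdown' : ∀ k, 1 ≤ k → lexLt (rf M (sh k s)) s := by
      intro k hk
      rcases hdown k with h | h
      · exact h
      · exact absurd ⟨k, hk, h⟩ hE
    by_cases hP : ∃ k, 1 ≤ k ∧ sh k s = s
    · obtain ⟨k, hk, hper⟩ := hP
      rcases has with h | rfl
      · obtain ⟨c, hc, hac, hcs⟩ := exists_strict_below hM hsM hs0 hup hdown' hk hper h
        exact absurd (Or.inl (lexLt_of_lt_of_le hcs hsb)) (hno c hc hac)
      · rcases had with h | rfl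
        · exact absurd h (not_lt_of_lexLe hds)
        · exact ultimatelyPeriodic_of_sh_eq hk hper (sh_zero _)
    · have hstrict : Strict M s := by
        refine ⟨hsM, hs0, fun k hk => ⟨?_, hdown' k hk⟩⟩
        rcases hup k with h | h
        · exact h
        · exact absurd ⟨k, hk, h⟩ hP
      rcases has with h | rfl
      · exact absurd hsb (hno s hstrict h)
      · obtain ⟨c, hc, hac, hcb⟩ := exists_strict_above hM hstrict hab
        exact absurd (Or.inl hcb) (hno c hc hac)

lemma ultimatelyPeriodic_of_no_univBase {q r : ℝ} {M : ℕ} (hM : 1 ≤ M) (h1 : (M : ℝ) < q)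
    (hqr : q < r) (h2 : r ≤ M + 1) (hemp : Set.Ioc q r ∩ UnivBases = ∅) {c : ℕ → ℕ}
    (hc : c ∈ USeq r \ USeq q) : UltimatelyPeriodic c := by
  have hMr := h1.trans hqr
  have hq2 := hqr.le.trans h2
  have hr1 := one_lt_base hM hMr
  have hq1 := one_lt_base hM h1
  obtain ⟨a, ha⟩ := exists_QG hM h1 hq2
  obtain ⟨b, hb⟩ := exists_QG hM hMr h2
  have ha0 := ha.zero_eq hM h1
  -- the case in which some digit of `c` can be raised in base `q`; the other one is its reflection
  have key : ∀ c ∈ USeq r, ∀ n, c n < M → ¬ lexLt (sh (n + 1) c) a → UltimatelyPeriodic c := by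
    intro c hc n hn hna
    have hcM := ((mem_USeq_iff hM hMr h2).1 hc).1
    have had := lexLe_of_not_lt hna
    have hd0 : c (n + 1) = M := by
      rcases had with ⟨k, u1, u2⟩ | h
      · rcases Nat.eq_zero_or_pos k with rfl | hk
        · have : a 0 < c (n + 1) := u2
          have := hcM (n + 1); omega
        · have := u1 0 hk
          simp only [sh, add_zero] at this
          rw [← this, ha0]
      · have := congrFun h 0
        simp only [sh, add_zero] at this
        rw [← this, ha0]
    refine ultimatelyPeriodic_of_sh (m := n + 1) ?_
    refine ultimatelyPeriodic_of_no_strict hM ha0 (ha.mono hM h1 hqr hb) (sh_le hcM) had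
      (fun k => ?_) (fun k => ?_) (fun e he hae heb => ?_)
    · rw [sh_sh]
      exact hb.lexLt_of_val hr1 (sh_le hcM) (USeq.val_tail_lt hM hMr h2 hc hn k)
    · rcases Nat.eq_zero_or_pos k with rfl | hk
      · refine ⟨0, fun i hi => by omega, ?_⟩
        rw [hb.zero_eq hM hMr]
        simp only [rf, sh, add_zero, hd0]
        omega
      · rw [sh_sh]
        have := USeq.val_rf_tail_lt hM hMr h2 hc (n := n + 1) (by omega) (k - 1)
        rw [show n + 1 + 1 + (k - 1) = n + 1 + k by omega] at this
        exact hb.lexLt_of_val hr1 (rf_le _ _) this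
    · have := exists_univBase hM hMr ha hb he hae heb
      rw [hemp] at this
      exact Set.not_nonempty_empty this
  obtain ⟨hcr, hcq⟩ := hc
  have hcM := ((mem_USeq_iff hM hMr h2).1 hcr).1
  by_contra hnp
  refine hcq (mem_USeq_of_lex hM h1 hq2 ha hcM (fun n hn => ?_) (fun n hn => ?_))
  · by_contra hna
    exact hnp (key c hcr n hn hna)
  · by_contra hna
    refine hnp (ultimatelyPeriodic_of_rf hcM (key _ (rf_mem_USeq hM hMr h2 hcr) n ?_ hna))
    have := hcM n
    simp only [rf]; omega

/-! ### Limits from the right of univoque bases -/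

lemma val_split {q : ℝ} {M : ℕ} {c : ℕ → ℕ} (hq : 1 < q) (hc : ∀ i, c i ≤ M) (k : ℕ) :
    val q c = ∑ i ∈ Finset.range k, (c i : ℝ) / q ^ (i + 1) + val q (sh k c) / q ^ k := by
  have h0 : q ≠ 0 := by positivity
  induction k with
  | zero => simp [sh_zero]
  | succ k ih =>
    have h1 : val q (sh k c) = (c k + val q (sh (k + 1) c)) / q := by
      rw [← val_step' hq hc k]; field_simp
    rw [ih, Finset.sum_range_succ, h1, pow_succ]
    field_simp
    ring

lemma tendsto_val {r : ℝ} {M : ℕ} {u : ℕ → ℝ} {x : ℕ → ℕ → ℕ} {c : ℕ → ℕ} (hr : 1 < r)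
    (hu : ∀ n, r ≤ u n) (hur : Filter.Tendsto u Filter.atTop (nhds r)) (hx : ∀ n i, x n i ≤ M)
    (hxc : ∀ i, ∀ᶠ n in Filter.atTop, x n i = c i) :
    Filter.Tendsto (fun n => val (u n) (x n)) Filter.atTop (nhds (val r c)) := by
  unfold val
  refine tendsto_tsum_of_dominated_convergence (bound := fun i => (M : ℝ) / r ^ (i + 1))
    (val_summable hr (c := fun _ => M) (fun _ => le_rfl)) (fun i => ?_)
    (Filter.Eventually.of_forall fun n i => ?_)
  · have h1 : Filter.Tendsto (fun n => (c i : ℝ) / u n ^ (i + 1)) Filter.atTop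
        (nhds ((c i : ℝ) / r ^ (i + 1))) :=
      tendsto_const_nhds.div (hur.pow _) (by positivity)
    refine h1.congr' ?_
    filter_upwards [hxc i] with n hn
    rw [hn]
  · have h1 : 0 < u n := by linarith [hu n]
    rw [Real.norm_of_nonneg (by positivity)]
    have h2 : (x n i : ℝ) ≤ M := by exact_mod_cast hx n i
    have := hu n
    gcongr

/-- A limit from the right of univoque bases is univoque (below the next integer). -/
lemma mem_UnivBases_of_right_limit {r : ℝ} {M : ℕ} (hM : 1 ≤ M) (h1 : (M : ℝ) < r)
    (h2 : r < M + 1) (h : ∀ s, r < s → ∃ u ∈ UnivBases, r < u ∧ u < s) : r ∈ UnivBases := by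
  have hr := one_lt_base hM h1
  have hu : ∀ n : ℕ, ∃ u ∈ UnivBases, r < u ∧
      u < min ((M : ℝ) + 1) (r + 1 / ((n : ℝ) + 1)) := fun n =>
    h _ (lt_min h2 (by
      have : (0 : ℝ) < 1 / ((n : ℝ) + 1) := by positivity
      linarith))
  choose u huU hur hus using hu
  have hu2 : ∀ n, u n ≤ M + 1 := fun n => ((hus n).trans_le (min_le_left _ _)).le
  have hu1 : ∀ n, (M : ℝ) < u n := fun n => h1.trans (hur n)
  have hu0 : ∀ n, 1 < u n := fun n => hr.trans (hur n)
  have hlim : Filter.Tendsto u Filter.atTop (nhds r) := by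
    refine tendsto_of_tendsto_of_tendsto_of_le_of_le (g := fun _ => r)
      (h := fun n : ℕ => r + 1 / ((n : ℝ) + 1)) tendsto_const_nhds ?_ (fun n => (hur n).le)
      (fun n => ((hus n).trans_le (min_le_right _ _)).le)
    simpa using tendsto_const_nhds.add (tendsto_one_div_add_atTop_nhds_zero_nat (𝕜 := ℝ))
  choose x hx using fun n => exists_QG hM (hu1 n) (hu2 n)
  have hK : IsCompact (Set.pi Set.univ fun _ : ℕ => Set.Iic M) :=
    isCompact_univ_pi fun _ => (Set.finite_Iic M).isCompact
  obtain ⟨c, hcK, φ, hφ, hφc⟩ := hK.tendsto_subseq (x := x) (fun n i _ => (hx n).1 i)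
  have hc : ∀ i, c i ≤ M := fun i => hcK i (Set.mem_univ i)
  have hev : ∀ i, ∀ᶠ n in Filter.atTop, x (φ n) i = c i := by
    intro i
    have h3 := (tendsto_pi_nhds.1 hφc) i
    rw [nhds_discrete, Filter.tendsto_pure] at h3
    exact h3
  have hlim' : Filter.Tendsto (fun n => u (φ n)) Filter.atTop (nhds r) :=
    hlim.comp hφ.tendsto_atTop
  have ht1 : ∀ k, Filter.Tendsto (fun n => val (u (φ n)) (sh k (x (φ n)))) Filter.atTop
      (nhds (val r (sh k c))) := fun k =>
    tendsto_val hr (fun n => (hur _).le) hlim' (fun n => sh_le (hx (φ n)).1) (fun i => hev (k + i))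
  have ht2 : ∀ k, Filter.Tendsto (fun n => val (u (φ n)) (rf M (sh k (x (φ n))))) Filter.atTop
      (nhds (val r (rf M (sh k c)))) := fun k =>
    tendsto_val hr (fun n => (hur _).le) hlim' (fun n => rf_le M _) (fun i => by
      filter_upwards [hev (k + i)] with n hn
      simp only [rf, sh, hn])
  have hval1 : val r c = 1 := by
    have h3 := ht1 0
    simp only [sh_zero, fun n => (hx n).2.1] at h3
    exact (tendsto_nhds_unique h3 tendsto_const_nhds)
  have hle1 : ∀ k, val r (sh k c) ≤ 1 := fun k =>
    le_of_tendsto' (ht1 k) fun n => ((hx (φ n)).2.2 k).2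
  have hle2 : ∀ k, 1 ≤ k → val r (rf M (sh k c)) ≤ 1 := fun k hk =>
    le_of_tendsto' (ht2 k) fun n =>
      (UnivBases.rf_tail hM (hu1 _) (hu2 _) (hx (φ n)) (huU _) hk).le
  -- equality would make the expansions in the larger bases `u (φ n)` have value less than `1`
  have hlt1 : ∀ k, 1 ≤ k → val r (sh k c) < 1 := by
    intro k hk
    refine lt_of_le_of_ne (hle1 k) fun heq => ?_
    have hall : ∀ᶠ n in Filter.atTop, ∀ i ∈ Finset.range k, x (φ n) i = c i :=
      (Finset.eventually_all _).2 fun i _ => hev i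
    obtain ⟨n, hn⟩ := hall.exists
    have e1 := val_split hr hc k
    have e2 := val_split (hu0 (φ n)) (hx (φ n)).1 k
    rw [hval1, heq] at e1
    rw [(hx (φ n)).2.1] at e2
    have e3 : ∑ i ∈ Finset.range k, (x (φ n) i : ℝ) / u (φ n) ^ (i + 1) ≤
        ∑ i ∈ Finset.range k, (c i : ℝ) / r ^ (i + 1) := by
      refine Finset.sum_le_sum fun i hi => ?_
      rw [hn i hi]
      have := (hur (φ n)).le
      gcongr
    have e4 : val (u (φ n)) (sh k (x (φ n))) / u (φ n) ^ k < 1 / r ^ k := by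
      have h3 := ((hx (φ n)).2.2 k).2
      have h4 : 0 < u (φ n) := by linarith [hu0 (φ n)]
      have h5 : r ^ k < u (φ n) ^ k := pow_lt_pow_left₀ (hur _) (by linarith) (by omega)
      calc val (u (φ n)) (sh k (x (φ n))) / u (φ n) ^ k ≤ 1 / u (φ n) ^ k := by gcongr
        _ < 1 / r ^ k := by
          apply one_div_lt_one_div_of_lt _ h5
          positivity
    linarith
  have hbig : 1 < M / (r - 1) := by
    rw [lt_div_iff₀ (by linarith)]; linarith
  have hQG : QG r M c := by
    refine ⟨hc, hval1, fun k => ⟨?_, hle1 k⟩⟩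
    rcases Nat.eq_zero_or_pos k with rfl | hk
    · rw [sh_zero, hval1]; norm_num
    · have h3 := hle2 k hk
      rw [val_rf hr (sh_le hc)] at h3
      linarith
  rw [mem_UnivBases_iff hM h1 h2.le hQG, mem_USeq_iff hM h1 h2.le]
  refine ⟨hc, fun n _ => hlt1 _ (by omega), fun n _ => ?_⟩
  refine lt_of_le_of_ne (hle2 _ (by omega)) fun heq => ?_
  -- otherwise the reflected tail is quasi-greedy as well, and `c` would be periodic
  have hQG' : QG r M (rf M (sh (n + 1) c)) := by
    refine ⟨rf_le _ _, heq, fun k => ?_⟩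
    rw [sh_rf, sh_sh]
    refine ⟨?_, hle2 _ (by omega)⟩
    rw [val_rf hr (sh_le hc)]
    linarith [hle1 (n + 1 + k)]
  have h3 := hQG'.unique hr hQG
  have h4 : sh (n + 1) c = rf M c := by
    have := congrArg (rf M) h3
    rwa [rf_rf (sh_le hc)] at this
  have h5 : sh (n + 1 + (n + 1)) c = c := by rw [← sh_sh, h4, sh_rf, h3]
  have h6 := hlt1 (n + 1 + (n + 1)) (by omega)
  rw [h5, hval1] at h6
  exact lt_irrefl _ h6

lemma natCast_add_one_mem_UnivBases {M : ℕ} (hM : 1 ≤ M) : (M : ℝ) + 1 ∈ UnivBases := by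
  have h1 : (M : ℝ) < M + 1 := by linarith
  have hq := one_lt_base hM h1
  have hM0 : (M : ℝ) ≠ 0 := by positivity
  have hv : val ((M : ℝ) + 1) (fun _ => M) = 1 := by
    rw [val_const hq, add_sub_cancel_right, div_self hM0]
  have hQG : QG ((M : ℝ) + 1) M fun _ => M := by
    refine ⟨fun _ => le_rfl, hv, fun k => ?_⟩
    have : sh k (fun _ => M) = fun _ => M := rfl
    rw [this, hv]; norm_num
  rw [mem_UnivBases_iff hM h1 le_rfl hQG, mem_USeq_iff hM h1 le_rfl]
  refine ⟨fun _ => le_rfl, fun n hn => absurd hn (lt_irrefl _), fun n _ => ?_⟩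
  have : sh (n + 1) (fun _ => M) = fun _ => M := rfl
  rw [this, val_rf hq (fun _ => le_rfl), hv, add_sub_cancel_right, div_self hM0]
  norm_num

/-- The only point of `(q, r]` that could be a limit of univoque bases outside `(q, r]` is `r`, as a
limit from the right. -/
lemma disjoint_closure {q r : ℝ} {M : ℕ} (hM : 1 ≤ M) (hMr : (M : ℝ) < r)
    (h2 : r ≤ M + 1) (hqr : q < r) (hemp : Set.Ioc q r ∩ UnivBases = ∅) :
    Set.Ioc q r ∩ closure UnivBases = ∅ := by
  have hnot : ∀ x, q < x → x ≤ r → x ∉ UnivBases := fun x hx1 hx2 hx => by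
    have : x ∈ Set.Ioc q r ∩ UnivBases := ⟨⟨hx1, hx2⟩, hx⟩
    rw [hemp] at this
    exact this
  rw [Set.eq_empty_iff_forall_notMem]
  rintro p ⟨⟨hp1, hp2⟩, hp3⟩
  rw [mem_closure_iff] at hp3
  rcases hp2.lt_or_eq with h | rfl
  · obtain ⟨x, ⟨hx1, hx2⟩, hx⟩ := hp3 (Set.Ioo q r) isOpen_Ioo ⟨hp1, h⟩
    exact hnot x hx1 hx2.le hx
  · rcases h2.lt_or_eq with h | h
    · refine hnot p hqr le_rfl (mem_UnivBases_of_right_limit hM hMr h fun s hs => ?_)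
      obtain ⟨x, ⟨hx1, hx2⟩, hx⟩ := hp3 (Set.Ioo q s) isOpen_Ioo ⟨hqr, hs⟩
      refine ⟨x, hx, ?_, hx2⟩
      by_contra hxp
      exact hnot x hx1 (not_lt.1 hxp) hx
    · exact hnot p hqr le_rfl (by rw [h]; exact natCast_add_one_mem_UnivBases hM)

/-! ### The equivalences -/

/-- Theorem 1.2. For `1 < q < r` with `⌈q⌉ = ⌈r⌉` the following are
equivalent: (i) `(q,r] ∩ 𝒰 = ∅`; (ii) `(q,r] ∩ closure 𝒰 = ∅`; (iii) every sequence in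
`𝒰_r' \ 𝒰_q'` is ultimately periodic; (iv) `𝒰_r' \ 𝒰_q'` is countable. -/
theorem main_theorem_tfae (q r : ℝ) (hq : 1 < q) (hqr : q < r) (hceil : ⌈q⌉ = ⌈r⌉) :
    [Set.Ioc q r ∩ UnivBases = ∅,
     Set.Ioc q r ∩ closure UnivBases = ∅,
     ∀ c ∈ USeq r \ USeq q, UltimatelyPeriodic c,
     (USeq r \ USeq q).Countable].TFAE := by
  obtain ⟨M, hM, h1, h2⟩ : ∃ M : ℕ, 1 ≤ M ∧ (M : ℝ) < q ∧ r ≤ M + 1 := by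
    have hc : (2 : ℤ) ≤ ⌈q⌉ := by
      have : (1 : ℤ) < ⌈q⌉ := Int.lt_ceil.2 (by exact_mod_cast hq)
      omega
    obtain ⟨M, hMq⟩ : ∃ M : ℕ, ⌈q⌉ = M + 1 := ⟨(⌈q⌉ - 1).toNat, by omega⟩
    refine ⟨M, by omega, ?_, ?_⟩
    · have : (M : ℤ) < ⌈q⌉ := by omega
      exact_mod_cast Int.lt_ceil.1 this
    · have := Int.le_ceil r
      rw [← hceil, hMq] at this
      exact_mod_cast this
  tfae_have 1 → 2 := disjoint_closure hM (h1.trans hqr) h2 hqr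
  tfae_have 2 → 1 := fun h => Set.subset_eq_empty
    (Set.inter_subset_inter_right _ subset_closure) h
  tfae_have 1 → 3 := fun h c hc => ultimatelyPeriodic_of_no_univBase hM h1 hqr h2 h hc
  tfae_have 3 → 4 := fun h => countable_ultimatelyPeriodic.mono h
  tfae_have 4 → 1 := by
    intro h
    rw [Set.eq_empty_iff_forall_notMem]
    rintro p ⟨⟨hp1, hp2⟩, hp3⟩
    exact not_countable_of_univBase hM h1 hp1 hp2 h2 hp3 h
  tfae_finish
end
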